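/- arXiv:2404.14972 — 2 statements merged into one kernel-verified Lean document; each statement's English description precedes it below -/
import Mathlib

section
/- Let H be a Hamiltonian pattern of size k (i.e. a graph on [k] which, after relabelling vertices, contains the Hamiltonian cycle with edges (1,2),(2,3),…,(k−1,k),(k,1)), and assume k > 2/(3−τ) and k is odd. Assume the weight variable W satisfies P(W > x) = c x^{1−τ}(1+o(1)) for x ≥ 1. Then E[N^{sub}(H)]/n^{k(3−τ)/2} converges, as n → ∞, to a finite positive constant I^{sub}(H) proportional to ∫_{(0,∞)^k} ∏_{i=1}^k y_i^{−τ} ∫_{(T^d)^k} ∏_{(i,j)∈E_H} min( y_i y_j / (μ ‖x_i − x_j‖^d), 1 )^γ dx dy, and E[N^{ind}(H)]/n^{k(3−τ)/2} converges to a finite positive constant I^{ind}(H) proportional to the same integral with the integrand multiplied by ∏_{(i,j)∉E_H} (1 − min( y_i y_j / (μ ‖x_i − x_j‖^d), 1 )^γ). -/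
open MeasureTheory Filter Finset

noncomputable section

instance : Fact ((0:ℝ) < 1) := ⟨one_pos⟩

/-- The `d`-dimensional torus `ℝ^d/ℤ^d`, with the sup of coordinatewise circle distances. -/
abbrev Torus (d : ℕ) := Fin d → AddCircle (1 : ℝ)

/-- Sample space of the GIRG on `n` vertices: weights, positions, and iid uniform
`[0,1]` coins deciding the presence of each potential edge. -/
abbrev GirgΩ (d n : ℕ) := (Fin n → ℝ) × (Fin n → Torus d) × (Sym2 (Fin n) → ℝ)

/-- The law of the randomness of the GIRG: iid weights with law `μW`, iid uniform positions
on the torus, iid uniform coins. -/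
def girgMeasure (μW : Measure ℝ) (d n : ℕ) : Measure (GirgΩ d n) :=
  (Measure.pi fun _ : Fin n => μW).prod
    ((Measure.pi fun _ : Fin n => (volume : Measure (Torus d))).prod
      (Measure.pi fun _ : Sym2 (Fin n) => volume.restrict (Set.Icc (0:ℝ) 1)))

/-- mean `μ = E[W]` of the weight distribution -/
def wMean (μW : Measure ℝ) : ℝ := ∫ x, x ∂μW

/-- Power-law tail assumption: `W ≥ 1` a.s. and `P(W > x) = c x^{1-τ} (1+o(1))` as `x → ∞`. -/
def WeightTail (τ c : ℝ) (μW : Measure ℝ) : Prop :=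
  0 < c ∧ μW (Set.Iio 1) = 0 ∧
    Tendsto (fun x : ℝ => (μW (Set.Ioi x)).toReal / (c * x ^ (1 - τ))) atTop (nhds 1)

/-- GIRG connection probability `min(1, (w_u w_v / (n μ ‖x_u - x_v‖^d))^γ)`. -/
def connProb (γ μbar : ℝ) (d n : ℕ) (w : Fin n → ℝ) (x : Fin n → Torus d)
    (u v : Fin n) : ℝ :=
  min 1 ((w u * w v / ((n : ℝ) * μbar * dist (x u) (x v) ^ d)) ^ γ)

/-- `u` and `v` are joined by an edge of the GIRG in outcome `ω`. -/
def girgEdge (γ μbar : ℝ) (d n : ℕ) (ω : GirgΩ d n) (u v : Fin n) : Prop :=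
  u ≠ v ∧ ω.2.2 s(u, v) ≤ connProb γ μbar d n ω.1 ω.2.1 u v

/-- the window `[ε t, t/ε]` -/
def windowIcc (ε t : ℝ) : Set ℝ := Set.Icc (ε * t) (t / ε)

/-- The set `M_ε^{(α,β)}` of ordered `k`-tuples of distinct vertices with prescribed
weights and inter-distances. -/
def Mset {k : ℕ} (ε : ℝ) (α : Fin k → ℝ) (β : Fin k → Fin k → ℝ) (d n : ℕ)
    (w : Fin n → ℝ) (x : Fin n → Torus d) : Set (Fin k → Fin n) :=
  {v | Function.Injective v ∧
    (∀ i, w (v i) ∈ windowIcc ε ((n : ℝ) ^ (α i))) ∧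
    (∀ i j : Fin k, i < j → dist (x (v i)) (x (v j)) ∈ windowIcc ε ((n : ℝ) ^ (β i j)))}

/-- `N^{sub}(H; M_ε^{(α,β)})` -/
def nSubM {k : ℕ} (H : SimpleGraph (Fin k)) (γ μbar ε : ℝ) (α : Fin k → ℝ)
    (β : Fin k → Fin k → ℝ) (d n : ℕ) (ω : GirgΩ d n) : ℕ :=
  Set.ncard {v : Fin k → Fin n | v ∈ Mset ε α β d n ω.1 ω.2.1 ∧
    ∀ i j : Fin k, H.Adj i j → girgEdge γ μbar d n ω (v i) (v j)}

/-- `N^{ind}(H; M_ε^{(α,β)})` -/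
def nIndM {k : ℕ} (H : SimpleGraph (Fin k)) (γ μbar ε : ℝ) (α : Fin k → ℝ)
    (β : Fin k → Fin k → ℝ) (d n : ℕ) (ω : GirgΩ d n) : ℕ :=
  Set.ncard {v : Fin k → Fin n | v ∈ Mset ε α β d n ω.1 ω.2.1 ∧
    ∀ i j : Fin k, i ≠ j → (H.Adj i j ↔ girgEdge γ μbar d n ω (v i) (v j))}

/-- `N^{sub}(H)` -/
def nSubTotal {k : ℕ} (H : SimpleGraph (Fin k)) (γ μbar : ℝ) (d n : ℕ)
    (ω : GirgΩ d n) : ℕ :=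
  Set.ncard {v : Fin k → Fin n | Function.Injective v ∧
    ∀ i j : Fin k, H.Adj i j → girgEdge γ μbar d n ω (v i) (v j)}

/-- `N^{ind}(H)` -/
def nIndTotal {k : ℕ} (H : SimpleGraph (Fin k)) (γ μbar : ℝ) (d n : ℕ)
    (ω : GirgΩ d n) : ℕ :=
  Set.ncard {v : Fin k → Fin n | Function.Injective v ∧
    ∀ i j : Fin k, i ≠ j → (H.Adj i j ↔ girgEdge γ μbar d n ω (v i) (v j))}

/-- `β` read as a symmetric matrix (only entries with `i < j` are meaningful). -/
def bsym {k : ℕ} (β : Fin k → Fin k → ℝ) (i j : Fin k) : ℝ := if i < j then β i j else β j i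

/-- The feasible region `F`. -/
def Feasible (τ : ℝ) (d : ℕ) {k : ℕ} (α : Fin k → ℝ) (β : Fin k → Fin k → ℝ) : Prop :=
  (∀ i, α i ∈ Set.Icc (0 : ℝ) (1 / (τ - 1))) ∧
  (∀ i j : Fin k, i < j → β i j ∈ Set.Icc (-(1 / (d : ℝ))) 0) ∧
  (∀ i j s : Fin k, i < j → s ≠ i → s ≠ j → β i j ≤ max (bsym β i s) (bsym β j s))

/-- `min_{i<j} β_{ij}` (with value `0 = sInf ∅` for the first vertex `j`,
which does not contribute). -/
def minBeta {k : ℕ} (β : Fin k → Fin k → ℝ) (j : Fin k) : ℝ :=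
  sInf {x : ℝ | ∃ i, i < j ∧ x = β i j}

open scoped Classical in
/-- The exponent `f_H(α,β)`. -/
def fExp (τ γ : ℝ) (d : ℕ) {k : ℕ} (H : SimpleGraph (Fin k))
    (α : Fin k → ℝ) (β : Fin k → Fin k → ℝ) : ℝ :=
  (k : ℝ) + (1 - τ) * ∑ i, α i + (d : ℝ) * ∑ j, minBeta β j +
    γ * ∑ p ∈ Finset.univ.filter (fun p : Fin k × Fin k => p.1 < p.2 ∧ H.Adj p.1 p.2),
        min (α p.1 + α p.2 - (d : ℝ) * β p.1 p.2 - 1) 0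

/-- Extra constraints for the induced optimization problem:
`α_i + α_j ≤ 1 + d β_{ij}` for all non-edges. -/
def IndConstr (d : ℕ) {k : ℕ} (H : SimpleGraph (Fin k)) (α : Fin k → ℝ)
    (β : Fin k → Fin k → ℝ) : Prop :=
  ∀ i j : Fin k, i < j → ¬H.Adj i j → α i + α j ≤ 1 + (d : ℝ) * β i j

/-- `(α,β)` is an optimal solution of the general optimization problem. -/
def IsOptimalSub (τ γ : ℝ) (d : ℕ) {k : ℕ} (H : SimpleGraph (Fin k))
    (α : Fin k → ℝ) (β : Fin k → Fin k → ℝ) : Prop :=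
  Feasible τ d α β ∧
    ∀ α' β', Feasible τ d α' β' → fExp τ γ d H α' β' ≤ fExp τ γ d H α β

/-- `(α,β)` is an optimal solution of the induced optimization problem. -/
def IsOptimalInd (τ γ : ℝ) (d : ℕ) {k : ℕ} (H : SimpleGraph (Fin k))
    (α : Fin k → ℝ) (β : Fin k → Fin k → ℝ) : Prop :=
  Feasible τ d α β ∧ IndConstr d H α β ∧
    ∀ α' β', Feasible τ d α' β' → IndConstr d H α' β' →
      fExp τ γ d H α' β' ≤ fExp τ γ d H α β

/-- the two kinds of subgraph counts -/
inductive StarKind | ind | sub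

/-- `N^⋆(H; M_ε^{(α,β)})` -/
def starNM (s : StarKind) {k : ℕ} (H : SimpleGraph (Fin k)) (γ μbar ε : ℝ) (α : Fin k → ℝ)
    (β : Fin k → Fin k → ℝ) (d n : ℕ) (ω : GirgΩ d n) : ℕ :=
  match s with
  | .sub => nSubM H γ μbar ε α β d n ω
  | .ind => nIndM H γ μbar ε α β d n ω

/-- `N^⋆(H)` -/
def starNTotal (s : StarKind) {k : ℕ} (H : SimpleGraph (Fin k)) (γ μbar : ℝ) (d n : ℕ)
    (ω : GirgΩ d n) : ℕ :=
  match s with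
  | .sub => nSubTotal H γ μbar d n ω
  | .ind => nIndTotal H γ μbar d n ω

/-- optimality in the optimization problem corresponding to `⋆` -/
def starIsOptimal (s : StarKind) (τ γ : ℝ) (d : ℕ) {k : ℕ} (H : SimpleGraph (Fin k))
    (α : Fin k → ℝ) (β : Fin k → Fin k → ℝ) : Prop :=
  match s with
  | .sub => IsOptimalSub τ γ d H α β
  | .ind => IsOptimalInd τ γ d H α β

/-- the optimal value `f_H^*` of the optimization problem corresponding to `⋆` -/
def starOptVal (s : StarKind) (τ γ : ℝ) (d : ℕ) {k : ℕ} (H : SimpleGraph (Fin k)) : ℝ :=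
  match s with
  | .sub => sSup {x | ∃ α β, Feasible τ d α β ∧ x = fExp τ γ d H α β}
  | .ind => sSup {x | ∃ α β, Feasible τ d α β ∧ IndConstr d H α β ∧ x = fExp τ γ d H α β}

/-- `(α,β)` is the unique optimal solution (in the `α`-variables and the
`β`-variables with `i < j`). -/
def UniquelyOptimal (s : StarKind) (τ γ : ℝ) (d : ℕ) {k : ℕ} (H : SimpleGraph (Fin k))
    (α : Fin k → ℝ) (β : Fin k → Fin k → ℝ) : Prop :=
  starIsOptimal s τ γ d H α β ∧
    ∀ α' β', starIsOptimal s τ γ d H α' β' →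
      α' = α ∧ ∀ i j : Fin k, i < j → β' i j = β i j


/-- `H` is a Hamiltonian pattern: after relabelling the vertices it contains the
Hamiltonian cycle `(1,2),(2,3),…,(k-1,k),(k,1)`. -/
def IsHamiltonianPattern {k : ℕ} [NeZero k] (H : SimpleGraph (Fin k)) : Prop :=
  ∃ σ : Equiv.Perm (Fin k), ∀ i : Fin k, H.Adj (σ i) (σ (i + 1))

open scoped Classical in
/-- the integral to which `I^{sub}(H)` is proportional -/
def IsubInt (τ γ μbar : ℝ) (d : ℕ) {k : ℕ} (H : SimpleGraph (Fin k)) : ℝ :=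
  ∫ y : Fin k → ℝ in {y | ∀ i, 0 < y i},
    (∏ i, y i ^ (-τ)) *
      ∫ x : Fin k → Torus d,
        ∏ p ∈ Finset.univ.filter (fun p : Fin k × Fin k => p.1 < p.2 ∧ H.Adj p.1 p.2),
          (min (y p.1 * y p.2 / (μbar * dist (x p.1) (x p.2) ^ d)) 1) ^ γ
        ∂(Measure.pi fun _ => (volume : Measure (Torus d)))
    ∂(Measure.pi fun _ => (volume : Measure ℝ))

open scoped Classical in
/-- the integral to which `I^{ind}(H)` is proportional -/
def IindInt (τ γ μbar : ℝ) (d : ℕ) {k : ℕ} (H : SimpleGraph (Fin k)) : ℝ :=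
  ∫ y : Fin k → ℝ in {y | ∀ i, 0 < y i},
    (∏ i, y i ^ (-τ)) *
      ∫ x : Fin k → Torus d,
        (∏ p ∈ Finset.univ.filter (fun p : Fin k × Fin k => p.1 < p.2 ∧ H.Adj p.1 p.2),
          (min (y p.1 * y p.2 / (μbar * dist (x p.1) (x p.2) ^ d)) 1) ^ γ) *
        ∏ p ∈ Finset.univ.filter (fun p : Fin k × Fin k => p.1 < p.2 ∧ ¬H.Adj p.1 p.2),
          (1 - (min (y p.1 * y p.2 / (μbar * dist (x p.1) (x p.2) ^ d)) 1) ^ γ)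
        ∂(Measure.pi fun _ => (volume : Measure (Torus d)))
    ∂(Measure.pi fun _ => (volume : Measure ℝ))

lemma mp_comp_inj {I J α : Type*} [Fintype I] [Fintype J] [MeasurableSpace α]
    (ν : Measure α) [IsProbabilityMeasure ν] (ι : I → J) (hι : Function.Injective ι) :
    MeasurePreserving (fun f : J → α => fun i => f (ι i))
      (Measure.pi fun _ : J => ν) (Measure.pi fun _ : I => ν) := by
  classical
  have hm : Measurable (fun f : J → α => fun i => f (ι i)) := by fun_prop
  refine ⟨hm, ?_⟩
  symm
  refine Measure.pi_eq fun s hs => ?_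
  rw [Measure.map_apply hm (MeasurableSet.univ_pi hs)]
  have : (fun f : J → α => fun i => f (ι i)) ⁻¹' (Set.univ.pi s)
      = Set.univ.pi (Function.extend ι s (fun _ => Set.univ)) := by
    ext f
    simp only [Set.mem_preimage, Set.mem_univ_pi]
    constructor
    · intro h j
      by_cases hj : ∃ i, ι i = j
      · obtain ⟨i, rfl⟩ := hj
        rw [hι.extend_apply]; exact h i
      · rw [Function.extend_apply' _ _ _ hj]; trivial
    · intro h i
      have := h (ι i)
      rwa [hι.extend_apply] at this
  rw [this, Measure.pi_pi]
  rw [← Finset.prod_subset (Finset.subset_univ (Finset.univ.image ι))]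
  · rw [Finset.prod_image (fun a _ b _ h => hι h)]
    simp [hι.extend_apply]
  · intro j _ hj
    rw [Function.extend_apply']
    · simp
    · simpa using hj

/-- pairs -/
abbrev PairsK (k : ℕ) := {p : Fin k × Fin k // p.1 < p.2}

open scoped Classical in
/-- allowed coin values -/
def AsK (b : Bool) {k : ℕ} (H : SimpleGraph (Fin k)) (p : PairsK k) (q : ℝ) : Set ℝ :=
  if H.Adj p.1.1 p.1.2 then Set.Iic q else if b then Set.Ioi q else Set.univ

/-- unified count -/
def cntK (b : Bool) {k : ℕ} (H : SimpleGraph (Fin k)) (γ μbar : ℝ) (d n : ℕ)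
    (ω : GirgΩ d n) : ℕ :=
  Set.ncard {v : Fin k → Fin n | Function.Injective v ∧ ∀ p : PairsK k,
    ω.2.2 s(v p.1.1, v p.1.2) ∈ AsK b H p (connProb γ μbar d n ω.1 ω.2.1 (v p.1.1) (v p.1.2))}

lemma connProb_comm (γ μbar : ℝ) (d n : ℕ) (w : Fin n → ℝ) (x : Fin n → Torus d)
    (u v : Fin n) : connProb γ μbar d n w x u v = connProb γ μbar d n w x v u := by
  unfold connProb; rw [dist_comm, mul_comm (w u)]

lemma girgEdge_comm (γ μbar : ℝ) (d n : ℕ) (ω : GirgΩ d n)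
    (u v : Fin n) : girgEdge γ μbar d n ω u v ↔ girgEdge γ μbar d n ω v u := by
  unfold girgEdge; rw [connProb_comm, Sym2.eq_swap, ne_comm]

lemma nSub_eq {k : ℕ} (H : SimpleGraph (Fin k)) (γ μbar : ℝ) (d n : ℕ)
    (ω : GirgΩ d n) : nSubTotal H γ μbar d n ω = cntK false H γ μbar d n ω := by
  unfold nSubTotal cntK
  congr 1
  ext v
  simp only [Set.mem_ofPred_eq]
  refine and_congr_right fun hv => ?_
  constructor
  · rintro h ⟨⟨i, j⟩, hij⟩
    unfold AsK
    split_ifs with h1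
    · exact (h i j h1).2
    · simp_all
    · trivial
  · intro h
    have key : ∀ i j, i < j → H.Adj i j → girgEdge γ μbar d n ω (v i) (v j) := by
      intro i j hij ha
      refine ⟨hv.ne hij.ne, ?_⟩
      have := h ⟨(i, j), hij⟩
      simpa [AsK, ha] using this
    intro i j ha
    rcases lt_trichotomy i j with h1 | h1 | h1
    · exact key i j h1 ha
    · exact (ha.ne h1).elim
    · rw [girgEdge_comm]; exact key j i h1 ha.symm

lemma nInd_eq {k : ℕ} (H : SimpleGraph (Fin k)) (γ μbar : ℝ) (d n : ℕ)
    (ω : GirgΩ d n) : nIndTotal H γ μbar d n ω = cntK true H γ μbar d n ω := by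
  unfold nIndTotal cntK
  congr 1
  ext v
  simp only [Set.mem_ofPred_eq]
  refine and_congr_right fun hv => ?_
  constructor
  · rintro h ⟨⟨i, j⟩, hij⟩
    have := h i j hij.ne
    unfold AsK
    split_ifs with h1
    · exact (this.1 h1).2
    · simp only [Set.mem_Ioi]
      by_contra h2
      exact h1 (this.2 ⟨hv.ne hij.ne, not_lt.1 h2⟩)
    · simp_all
  · intro h
    have key : ∀ i j, i < j → (H.Adj i j ↔ girgEdge γ μbar d n ω (v i) (v j)) := by
      intro i j hij
      have := h ⟨(i, j), hij⟩
      by_cases ha : H.Adj i j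
      · simp only [ha, true_iff]
        exact ⟨hv.ne hij.ne, by simpa [AsK, ha] using this⟩
      · simp only [ha, false_iff]
        intro h2
        simp only [AsK, ha, if_false, if_true, Set.mem_Ioi] at this
        exact absurd h2.2 (not_le.2 this)
    intro i j hij
    rcases lt_or_gt_of_ne hij with h1 | h1
    · exact key i j h1
    · rw [girgEdge_comm, H.adj_comm]; exact key j i h1

/-- small sample space measure -/
def smallM (μW : Measure ℝ) (d k : ℕ) :
    Measure ((Fin k → ℝ) × (Fin k → Torus d) × (PairsK k → ℝ)) :=
  (Measure.pi fun _ : Fin k => μW).prod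
    ((Measure.pi fun _ : Fin k => (volume : Measure (Torus d))).prod
      (Measure.pi fun _ : PairsK k => volume.restrict (Set.Icc (0:ℝ) 1)))

/-- small connection probability -/
def cpK {k : ℕ} (γ μbar : ℝ) (d n : ℕ) (w : Fin k → ℝ) (x : Fin k → Torus d) (i j : Fin k) : ℝ :=
  min 1 ((w i * w j / ((n : ℝ) * μbar * dist (x i) (x j) ^ d)) ^ γ)

/-- small event -/
def smallE (b : Bool) {k : ℕ} (H : SimpleGraph (Fin k)) (γ μbar : ℝ) (d n : ℕ) :
    Set ((Fin k → ℝ) × (Fin k → Torus d) × (PairsK k → ℝ)) :=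
  {z | ∀ p : PairsK k, z.2.2 p ∈ AsK b H p (cpK γ μbar d n z.1 z.2.1 p.1.1 p.1.2)}

instance : IsProbabilityMeasure (volume : Measure (AddCircle (1:ℝ))) := ⟨by simp⟩
instance (d : ℕ) : IsProbabilityMeasure (volume : Measure (Torus d)) := by
  unfold Torus; infer_instance
instance coinProb : IsProbabilityMeasure (volume.restrict (Set.Icc (0:ℝ) 1)) := ⟨by simp⟩
instance (μW : Measure ℝ) [IsProbabilityMeasure μW] (d n : ℕ) :
    IsProbabilityMeasure (girgMeasure μW d n) := by unfold girgMeasure; infer_instance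
instance (μW : Measure ℝ) [IsProbabilityMeasure μW] (d n : ℕ) :
    IsProbabilityMeasure (smallM μW d n) := by unfold smallM; infer_instance

lemma cpK_meas {k : ℕ} (γ μbar : ℝ) (d n : ℕ) (i j : Fin k) :
    Measurable (fun z : (Fin k → ℝ) × (Fin k → Torus d) => cpK γ μbar d n z.1 z.2 i j) := by
  unfold cpK
  fun_prop

lemma smallE_meas (b : Bool) {k : ℕ} (H : SimpleGraph (Fin k)) (γ μbar : ℝ) (d n : ℕ) :
    MeasurableSet (smallE b H γ μbar d n) := by
  unfold smallE
  rw [Set.ofPred_forall]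
  refine MeasurableSet.iInter fun p => ?_
  have h1 : Measurable (fun z : (Fin k → ℝ) × (Fin k → Torus d) × (PairsK k → ℝ) =>
      cpK γ μbar d n z.1 z.2.1 p.1.1 p.1.2) :=
    (cpK_meas γ μbar d n p.1.1 p.1.2).comp (measurable_fst.prodMk (measurable_fst.comp measurable_snd))
  have h2 : Measurable (fun z : (Fin k → ℝ) × (Fin k → Torus d) × (PairsK k → ℝ) => z.2.2 p) := by
    fun_prop
  unfold AsK
  split_ifs
  · exact measurableSet_le h2 h1
  · exact measurableSet_lt h1 h2
  · simp

lemma cnt_expect (b : Bool) {k : ℕ} (H : SimpleGraph (Fin k)) (γ μbar : ℝ) (d n : ℕ)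
    (μW : Measure ℝ) [IsProbabilityMeasure μW] :
    ∫ ω, (cntK b H γ μbar d n ω : ℝ) ∂(girgMeasure μW d n)
      = (n.descFactorial k : ℝ) * (smallM μW d k).real (smallE b H γ μbar d n) := by
  classical
  let E : (Fin k → Fin n) → Set (GirgΩ d n) := fun v => {ω | ∀ p : PairsK k,
    ω.2.2 s(v p.1.1, v p.1.2) ∈ AsK b H p (connProb γ μbar d n ω.1 ω.2.1 (v p.1.1) (v p.1.2))}
  have hmp : ∀ v : Fin k → Fin n, Function.Injective v →
      MeasurableSet (E v) ∧ (girgMeasure μW d n).real (E v)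
        = (smallM μW d k).real (smallE b H γ μbar d n) := by
    intro v hv
    have hinj : Function.Injective (fun p : PairsK k => s(v p.1.1, v p.1.2)) := by
      rintro ⟨⟨i, j⟩, hij⟩ ⟨⟨i', j'⟩, hij'⟩ h
      simp only [Sym2.eq_iff] at h
      simp only at hij hij'
      rcases h with ⟨h1, h2⟩ | ⟨h1, h2⟩
      · simp [hv h1, hv h2]
      · have := hv h1; have := hv h2; omega
    have m := (mp_comp_inj μW v hv).prod ((mp_comp_inj (volume : Measure (Torus d)) v hv).prod
      (mp_comp_inj (volume.restrict (Set.Icc (0:ℝ) 1)) _ hinj))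
    have hE : E v = (Prod.map (fun f : Fin n → ℝ => fun i => f (v i))
        (Prod.map (fun f : Fin n → Torus d => fun i => f (v i))
          (fun f : Sym2 (Fin n) → ℝ => fun p : PairsK k => f s(v p.1.1, v p.1.2)))) ⁻¹'
          (smallE b H γ μbar d n) := by
      ext ω; rfl
    constructor
    · rw [hE]; exact m.measurable (smallE_meas ..)
    · rw [hE, measureReal_def, measureReal_def]
      congr 1
      exact m.measure_preimage (smallE_meas ..).nullMeasurableSet
  have hc : ∀ ω : GirgΩ d n, (cntK b H γ μbar d n ω : ℝ)
      = ∑ v ∈ (Finset.univ : Finset (Fin k → Fin n)).filter Function.Injective,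
          (E v).indicator (fun _ => (1:ℝ)) ω := by
    intro ω
    unfold cntK
    rw [Set.ncard_eq_toFinset_card']
    simp only [Set.indicator_apply]
    rw [Finset.sum_boole, Finset.filter_filter]
    congr 2
    ext v
    simp [E]
  simp_rw [hc]
  rw [integral_finsetSum]
  · rw [Finset.sum_congr rfl (g := fun _ => (smallM μW d k).real (smallE b H γ μbar d n))]
    · rw [Finset.sum_const, nsmul_eq_mul]
      congr 2
      have : ((Finset.univ : Finset (Fin k → Fin n)).filter Function.Injective).card
          = Fintype.card (Fin k ↪ Fin n) := by
        rw [← Fintype.card_subtype]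
        exact Fintype.card_congr (Equiv.subtypeInjectiveEquivEmbedding _ _)
      rw [this, Fintype.card_embedding_eq]; simp
    · intro v hv
      have hv' := (Finset.mem_filter.1 hv).2
      rw [integral_indicator_const _ (hmp v hv').1, (hmp v hv').2]; simp
  · intro v hv
    have hv' := (Finset.mem_filter.1 hv).2
    exact (integrable_const (1:ℝ)).indicator (hmp v hv').1

open scoped Classical in
/-- factor for a pair -/
def facK (b : Bool) {k : ℕ} (H : SimpleGraph (Fin k)) (p : PairsK k) (q : ℝ) : ℝ :=
  if H.Adj p.1.1 p.1.2 then q else if b then 1 - q else 1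

lemma fac_coin (b : Bool) {k : ℕ} (H : SimpleGraph (Fin k)) (p : PairsK k) (q : ℝ)
    (h0 : 0 ≤ q) (h1 : q ≤ 1) :
    (volume.restrict (Set.Icc (0:ℝ) 1)).real (AsK b H p q) = facK b H p q := by
  unfold AsK facK
  split_ifs
  · rw [measureReal_restrict_apply measurableSet_Iic]
    have : Set.Iic q ∩ Set.Icc (0:ℝ) 1 = Set.Icc 0 q := by ext z; simp; grind
    rw [this]; simp [h0]
  · rw [measureReal_restrict_apply measurableSet_Ioi]
    have : Set.Ioi q ∩ Set.Icc (0:ℝ) 1 = Set.Ioc q 1 := by ext z; simp; grind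
    rw [this]; simp [h1]
  · simp

lemma small_real (b : Bool) {k : ℕ} (H : SimpleGraph (Fin k)) (γ μbar : ℝ) (hμ : 0 < μbar)
    (d n : ℕ) (μW : Measure ℝ) [IsProbabilityMeasure μW] (hW : ∀ᵐ x ∂μW, 0 < x) :
    (smallM μW d k).real (smallE b H γ μbar d n)
      = ∫ w : Fin k → ℝ, ∫ x : Fin k → Torus d,
          ∏ p : PairsK k, facK b H p (cpK γ μbar d n w x p.1.1 p.1.2)
          ∂(Measure.pi fun _ => (volume : Measure (Torus d))) ∂(Measure.pi fun _ => μW) := by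
  have hE := smallE_meas b H γ μbar d n
  have hint : Integrable ((smallE b H γ μbar d n).indicator (fun _ => (1:ℝ))) (smallM μW d k) :=
    (integrable_const (1:ℝ)).indicator hE
  have e1 : (smallM μW d k).real (smallE b H γ μbar d n)
      = ∫ z, (smallE b H γ μbar d n).indicator (fun _ => (1:ℝ)) z ∂(smallM μW d k) := by
    rw [integral_indicator_const _ hE]; simp
  rw [e1]
  unfold smallM at hint ⊢
  rw [integral_prod _ hint]
  have hpos : ∀ᵐ w : Fin k → ℝ ∂(Measure.pi fun _ => μW), ∀ i, 0 < w i := by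
    rw [ae_all_iff]
    intro i
    exact (Measure.quasiMeasurePreserving_eval (fun _ : Fin k => μW) i).ae hW
  refine integral_congr_ae ?_
  filter_upwards [hint.prod_right_ae, hpos] with w hw hwp
  rw [integral_prod _ hw]
  refine integral_congr_ae ?_
  filter_upwards [] with x
  have hs : (fun c : PairsK k → ℝ => (smallE b H γ μbar d n).indicator (fun _ => (1:ℝ)) (w, x, c))
      = (Set.univ.pi fun p : PairsK k => AsK b H p (cpK γ μbar d n w x p.1.1 p.1.2)).indicator
          (fun _ => (1:ℝ)) := by
    ext c
    classical
    rw [Set.indicator_apply, Set.indicator_apply]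
    simp only [smallE, Set.mem_ofPred_eq, Set.mem_univ_pi]
    congr
  have hAm : ∀ p q, MeasurableSet (AsK b H p q) := by
    intro p q; unfold AsK; split_ifs <;> measurability
  simp only [hs]
  rw [integral_indicator_const _ (MeasurableSet.univ_pi fun p => hAm _ _)]
  rw [measureReal_def, Measure.pi_pi, ENNReal.toReal_prod]
  simp only [smul_eq_mul, mul_one]
  refine Finset.prod_congr rfl fun p _ => ?_
  rw [← measureReal_def]
  refine fac_coin b H p _ ?_ (min_le_left _ _)
  refine le_min zero_le_one (Real.rpow_nonneg ?_ _)
  have := hwp p.1.1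
  have := hwp p.1.2
  positivity

/-- survival function -/
def survK (μW : Measure ℝ) (x : ℝ) : ℝ := (μW (Set.Ioi x)).toReal

/-- quantile -/
def quK (μW : Measure ℝ) (u : ℝ) : ℝ := sInf {x : ℝ | survK μW x ≤ u}

section
variable (μW : Measure ℝ) [IsProbabilityMeasure μW]

lemma surv_anti : Antitone (survK μW) := by
  intro a b h
  exact ENNReal.toReal_mono (measure_ne_top _ _) (measure_mono (Set.Ioi_subset_Ioi h))

lemma surv_le_one (x : ℝ) : survK μW x ≤ 1 := by
  have := prob_le_one (μ := μW) (s := Set.Ioi x)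
  exact ENNReal.toReal_le_of_le_ofReal zero_le_one (by simpa using this)

lemma surv_eq (x : ℝ) : survK μW x = 1 - ProbabilityTheory.cdf μW x := by
  rw [ProbabilityTheory.cdf_eq_real]
  unfold survK
  rw [← Set.compl_Iic, ← measureReal_def, probReal_compl_eq_one_sub measurableSet_Iic]

lemma surv_one (h1 : μW (Set.Iio 1) = 0) {x : ℝ} (hx : x < 1) : survK μW x = 1 := by
  rw [surv_eq, ProbabilityTheory.cdf_eq_real, measureReal_def,
    measure_mono_null (Set.Iic_subset_Iio.2 hx) h1]; simp

lemma surv_top : Tendsto (survK μW) atTop (nhds 0) := by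
  have := (ProbabilityTheory.tendsto_cdf_atTop μW).const_sub 1
  simpa [← surv_eq, funext_iff] using this.congr fun x => (surv_eq μW x).symm

lemma surv_rcont (x : ℝ) : ContinuousWithinAt (survK μW) (Set.Ici x) x := by
  have : survK μW = fun x => 1 - ProbabilityTheory.cdf μW x := funext (surv_eq μW)
  rw [this]
  exact continuousWithinAt_const.sub ((ProbabilityTheory.cdf μW).right_continuous x)

/-- Galois -/
lemma qu_le_iff (h1 : μW (Set.Iio 1) = 0) {u x : ℝ} (hu : u ∈ Set.Ioo (0:ℝ) 1) :
    quK μW u ≤ x ↔ survK μW x ≤ u := by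
  have hb : BddBelow {x : ℝ | survK μW x ≤ u} := by
    refine ⟨1, fun y hy => ?_⟩
    by_contra h
    have := surv_one μW h1 (not_le.1 h)
    have h2 : survK μW y ≤ u := hy
    linarith [hu.2]
  have hne : {x : ℝ | survK μW x ≤ u}.Nonempty := by
    obtain ⟨y, hy⟩ := ((surv_top μW).eventually (gt_mem_nhds hu.1)).exists
    exact ⟨y, le_of_lt hy⟩
  constructor
  · intro h
    refine le_trans (surv_anti μW h) ?_
    have hr := surv_rcont μW (quK μW u)
    have hr' : Tendsto (survK μW) (nhdsWithin (quK μW u) (Set.Ioi (quK μW u)))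
        (nhds (survK μW (quK μW u))) := hr.mono_left (nhdsWithin_mono _ Set.Ioi_subset_Ici_self)
    refine le_of_tendsto hr' ?_
    filter_upwards [self_mem_nhdsWithin] with y hy
    obtain ⟨z, hz, hzy⟩ := exists_lt_of_csInf_lt hne hy
    exact (surv_anti μW hzy.le).trans hz
  · intro h
    exact csInf_le hb h

lemma qu_ge_one (h1 : μW (Set.Iio 1) = 0) {u : ℝ} (hu : u ∈ Set.Ioo (0:ℝ) 1) :
    1 ≤ quK μW u := by
  by_contra h
  obtain ⟨y, hy1, hy2⟩ := exists_between (not_le.1 h)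
  have := (qu_le_iff μW h1 hu).1 hy1.le
  rw [surv_one μW h1 hy2] at this
  linarith [hu.2]

/-- quantile cut off outside (0,1) -/
def quC (u : ℝ) : ℝ := (Set.Ioo (0:ℝ) 1).indicator (quK μW) u

lemma quC_meas (h1 : μW (Set.Iio 1) = 0) : Measurable (quC μW) := by
  have ha : AntitoneOn (quK μW) (Set.Ioo (0:ℝ) 1) := by
    intro a ha b hb hab
    rw [qu_le_iff μW h1 hb]
    exact ((qu_le_iff μW h1 ha).1 le_rfl).trans hab
  unfold quC
  have : Measurable ((Set.Ioo (0:ℝ) 1).domRestrict (quK μW)) := by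
    apply Antitone.measurable
    intro a b hab
    exact ha a.2 b.2 hab
  exact measurable_of_restrict_of_restrict_compl measurableSet_Ioo
    (by
      convert this using 1
      ext z; simp [Set.domRestrict])
    (by
      have : (Set.Ioo (0:ℝ) 1)ᶜ.domRestrict (fun u => (Set.Ioo (0:ℝ) 1).indicator (quK μW) u)
        = fun _ => 0 := by
        ext z; simp only [Set.domRestrict]; exact Set.indicator_of_notMem z.2 _
      rw [this]; exact measurable_const)

lemma map_qu (h1 : μW (Set.Iio 1) = 0) :
    (volume.restrict (Set.Ioo (0:ℝ) 1)).map (quC μW) = μW := by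
  have hm := quC_meas μW h1
  have : IsProbabilityMeasure (volume.restrict (Set.Ioo (0:ℝ) 1)) := ⟨by simp⟩
  have := Measure.isProbabilityMeasure_map (μ := volume.restrict (Set.Ioo (0:ℝ) 1)) hm.aemeasurable
  refine Measure.ext_of_Iic _ _ fun x => ?_
  rw [Measure.map_apply hm measurableSet_Iic, Measure.restrict_apply (hm measurableSet_Iic)]
  have hs : quC μW ⁻¹' Set.Iic x ∩ Set.Ioo 0 1 = {u | survK μW x ≤ u} ∩ Set.Ioo 0 1 := by
    ext u
    simp only [Set.mem_inter_iff, Set.mem_preimage, Set.mem_Iic, Set.mem_ofPred_eq]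
    refine and_congr_left fun hu => ?_
    unfold quC
    rw [Set.indicator_of_mem hu, qu_le_iff μW h1 hu]
  have h0 : 0 ≤ survK μW x := ENNReal.toReal_nonneg
  have e : volume ({u | survK μW x ≤ u} ∩ Set.Ioo (0:ℝ) 1) = ENNReal.ofReal (1 - survK μW x) := by
    apply le_antisymm
    · refine (measure_mono (t := Set.Icc (survK μW x) 1) ?_).trans (by simp)
      rintro u ⟨hu, hu2⟩; exact ⟨hu, hu2.2.le⟩
    · rw [← Real.volume_Ioo]
      refine measure_mono ?_
      rintro u ⟨hu, hu2⟩; exact ⟨hu.le, h0.trans_lt hu, hu2⟩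
  rw [hs, e, surv_eq, sub_sub_cancel, ProbabilityTheory.ofReal_cdf]

end

section
variable {τ c : ℝ} {μW : Measure ℝ} [IsProbabilityMeasure μW]

lemma surv_bound (hτ : τ ∈ Set.Ioo (2:ℝ) 3) (hW : WeightTail τ c μW) :
    ∃ C : ℝ, 0 < C ∧ ∀ x : ℝ, 0 < x → survK μW x ≤ C * x ^ (1 - τ) := by
  obtain ⟨hc, h1, ht⟩ := hW
  have := ht.eventually (gt_mem_nhds (show (1:ℝ) < 2 by norm_num))
  obtain ⟨X, hX⟩ := eventually_atTop.1 this
  set Y := max X 1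
  have hY : 1 ≤ Y := le_max_right _ _
  refine ⟨2 * c + Y ^ (τ - 1), by positivity, fun x hx => ?_⟩
  have hp : 0 < x ^ (1 - τ) := Real.rpow_pos_of_pos hx _
  rcases le_or_gt Y x with h | h
  · have := hX x ((le_max_left _ _).trans h)
    rw [div_lt_iff₀ (by positivity)] at this
    have h3 : 0 ≤ Y ^ (τ - 1) * x ^ (1 - τ) := by positivity
    unfold survK
    nlinarith
  · have h2 : 1 ≤ Y ^ (τ - 1) * x ^ (1 - τ) := by
      have : x ^ (τ - 1) ≤ Y ^ (τ - 1) := Real.rpow_le_rpow hx.le h.le (by linarith [hτ.1])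
      have e : x ^ (1 - τ) = (x ^ (τ - 1))⁻¹ := by rw [← Real.rpow_neg hx.le]; congr 1; ring
      rw [e, ← div_eq_mul_inv, le_div_iff₀ (by positivity)]; linarith
    have := surv_le_one μW x
    have h3 : 0 < 2 * c * x ^ (1 - τ) := by positivity
    nlinarith

/-- the function `φ_C` -/
def phiK (τ C t : ℝ) : ℝ := (C / t) ^ (1 / (τ - 1))

lemma phi_pos {C t : ℝ} (hC : 0 < C) (ht : 0 < t) : 0 < phiK τ C t := by
  unfold phiK; positivity

lemma phi_pow (hτ : τ ∈ Set.Ioo (2:ℝ) 3) {C t : ℝ} (hC : 0 < C) (ht : 0 < t) :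
    C * (phiK τ C t) ^ (1 - τ) = t := by
  unfold phiK
  have : 0 < C / t := by positivity
  have h1 := hτ.1
  rw [← Real.rpow_mul this.le]
  have e : 1 / (τ - 1) * (1 - τ) = -1 := by
    have : τ - 1 ≠ 0 := by linarith
    field_simp; ring
  rw [e, Real.rpow_neg_one]; field_simp

lemma qu_bound (hτ : τ ∈ Set.Ioo (2:ℝ) 3) (h1 : μW (Set.Iio 1) = 0) {C : ℝ} (hC : 0 < C)
    (hb : ∀ x : ℝ, 0 < x → survK μW x ≤ C * x ^ (1 - τ)) {u : ℝ} (hu : u ∈ Set.Ioo (0:ℝ) 1) :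
    quK μW u ≤ phiK τ C u := by
  rw [qu_le_iff μW h1 hu]
  have := hb _ (phi_pos (τ := τ) hC hu.1)
  rwa [phi_pow hτ hC hu.1] at this

lemma W_integrable (hτ : τ ∈ Set.Ioo (2:ℝ) 3) (hW : WeightTail τ c μW) :
    Integrable (fun x : ℝ => x) μW := by
  obtain ⟨C, hC, hb⟩ := surv_bound hτ hW
  have h1 := hW.2.1
  have hm := quC_meas μW h1
  rw [← map_qu μW h1, integrable_map_measure (by fun_prop) hm.aemeasurable]
  have hi : IntegrableOn (fun u : ℝ => C ^ (1 / (τ - 1)) * u ^ (-(1 / (τ - 1)))) (Set.Ioo 0 1) := by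
    refine Integrable.const_mul ?_ _
    rw [← IntegrableOn, intervalIntegral.integrableOn_Ioo_rpow_iff one_pos]
    have : 1 / (τ - 1) < 1 := by rw [div_lt_one] <;> linarith [hτ.1]
    linarith
  refine Integrable.mono' hi hm.aestronglyMeasurable ?_
  filter_upwards [ae_restrict_mem measurableSet_Ioo] with u hu
  simp only [Function.comp]
  unfold quC
  rw [Set.indicator_of_mem hu, Real.norm_of_nonneg (by linarith [qu_ge_one μW h1 hu])]
  refine (qu_bound hτ h1 hC hb hu).trans (le_of_eq ?_)
  unfold phiK
  rw [Real.div_rpow hC.le hu.1.le, Real.rpow_neg hu.1.le, div_eq_mul_inv]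

lemma W_pos (hW : WeightTail τ c μW) : ∀ᵐ x ∂μW, 1 ≤ x := by
  rw [ae_iff]; simpa [Set.Iio] using hW.2.1

lemma wMean_pos (hτ : τ ∈ Set.Ioo (2:ℝ) 3) (hW : WeightTail τ c μW) : 0 < wMean μW := by
  have : ∫ x, (1:ℝ) ∂μW ≤ wMean μW :=
    integral_mono_ae (integrable_const _) (W_integrable hτ hW) (W_pos hW)
  simp at this; linarith

/-- scaling limit of the quantile -/
lemma qu_tendsto (hτ : τ ∈ Set.Ioo (2:ℝ) 3) (hW : WeightTail τ c μW) {t : ℝ} (ht : 0 < t) :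
    Tendsto (fun n : ℕ => quK μW ((n:ℝ) ^ (-((τ - 1) / 2)) * t) / Real.sqrt n) atTop
      (nhds (phiK τ c t)) := by
  have hc := hW.1
  have h1 := hW.2.1
  have hτ1 := hτ.1
  have hR : Tendsto (fun n : ℕ => (n:ℝ) ^ (-((τ - 1) / 2)) * t) atTop (nhds 0) := by
    have := ((tendsto_rpow_neg_atTop (show 0 < (τ - 1) / 2 by linarith)).comp
      tendsto_natCast_atTop_atTop).mul_const t
    simpa using this
  have hmem : ∀ᶠ n : ℕ in atTop, (n:ℝ) ^ (-((τ - 1) / 2)) * t ∈ Set.Ioo (0:ℝ) 1 := by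
    filter_upwards [hR.eventually (gt_mem_nhds one_pos), eventually_gt_atTop 0] with n hn h0
    exact ⟨by positivity, hn⟩
  have hsq : Tendsto (fun n : ℕ => Real.sqrt n) atTop atTop :=
    Real.tendsto_sqrt_atTop.comp tendsto_natCast_atTop_atTop
  -- rescaled survival
  have hs : ∀ y : ℝ, 0 < y → Tendsto (fun n : ℕ => survK μW (y * Real.sqrt n) *
      (n:ℝ) ^ ((τ - 1) / 2)) atTop (nhds (c * y ^ (1 - τ))) := by
    intro y hy
    have h2 := (hW.2.2.comp (hsq.const_mul_atTop hy)).mul_const (c * y ^ (1 - τ))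
    rw [one_mul] at h2
    refine h2.congr' ?_
    filter_upwards [eventually_gt_atTop 0] with n hn
    have hn' : (0:ℝ) < n := by exact_mod_cast hn
    simp only [Function.comp]
    rw [Real.mul_rpow hy.le (Real.sqrt_nonneg _)]
    have e : (Real.sqrt n) ^ (1 - τ) = ((n:ℝ) ^ ((τ - 1) / 2))⁻¹ := by
      rw [Real.sqrt_eq_rpow, ← Real.rpow_mul hn'.le, ← Real.rpow_neg hn'.le]; congr 1; ring
    rw [e]
    have : 0 < y ^ (1 - τ) := by positivity
    have : 0 < (n:ℝ) ^ ((τ - 1) / 2) := by positivity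
    unfold survK
    field_simp
  have hiff : ∀ y : ℝ, ∀ᶠ n : ℕ in atTop,
      (quK μW ((n:ℝ) ^ (-((τ - 1) / 2)) * t) / Real.sqrt n ≤ y ↔
        survK μW (y * Real.sqrt n) * (n:ℝ) ^ ((τ - 1) / 2) ≤ t) := by
    intro y
    filter_upwards [hmem, eventually_gt_atTop 0] with n hn h0
    have hn' : (0:ℝ) < n := by exact_mod_cast h0
    rw [div_le_iff₀ (Real.sqrt_pos.2 hn'), qu_le_iff μW h1 hn, Real.rpow_neg hn'.le,
      inv_mul_eq_div, le_div_iff₀ (by positivity)]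
  have hanti : ∀ a b : ℝ, 0 < a → a < b → c * b ^ (1 - τ) < c * a ^ (1 - τ) := by
    intro a b ha hab
    have := Real.rpow_lt_rpow_of_neg ha hab (show 1 - τ < 0 by linarith)
    exact mul_lt_mul_of_pos_left this hc
  have hφ := phi_pos (τ := τ) hc ht
  have hφt := phi_pow hτ hc ht
  refine tendsto_order.2 ⟨fun a ha => ?_, fun b hb => ?_⟩
  · -- choose a' = max a (φ/2)
    have ha' : max a (phiK τ c t / 2) < phiK τ c t := max_lt ha (by linarith)
    have hp : 0 < max a (phiK τ c t / 2) := lt_max_of_lt_right (by linarith)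
    have h3 := hanti _ _ hp ha'
    rw [hφt] at h3
    filter_upwards [hiff (max a (phiK τ c t / 2)), (hs _ hp).eventually (lt_mem_nhds h3)] with n h4 h5
    by_contra h6
    exact absurd (h4.1 ((not_lt.1 h6).trans (le_max_left _ _))) (not_le.2 h5)
  · obtain ⟨b', hb1, hb2⟩ := exists_between hb
    have h3 := hanti _ _ hφ hb1
    rw [hφt] at h3
    filter_upwards [hiff b', (hs _ (hφ.trans hb1)).eventually (gt_mem_nhds h3)] with n h4 h5
    exact (h4.2 h5.le).trans_lt hb2
end

lemma min_le_frac {a r : ℝ} (ha : 0 < a) (hr : 0 ≤ r) : min (a / r) 1 ≤ 2 / (1 + r / a) := by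
  have e : 2 / (1 + r / a) = 2 * a / (a + r) := by field_simp
  rw [e]
  rcases le_total r a with h | h
  · refine (min_le_right _ _).trans ?_
    rw [le_div_iff₀ (by positivity)]; linarith
  · have : 0 < r := ha.trans_le h
    refine (min_le_left _ _).trans ?_
    rw [div_le_div_iff₀ this (by positivity)]; nlinarith

lemma circ_int {γ : ℝ} (hγ : 1 < γ) : ∃ C : ℝ, 0 < C ∧ ∀ a : ℝ, 0 < a →
    ∫⁻ z : AddCircle (1:ℝ), ENNReal.ofReal ((2 / (1 + ‖z‖ / a)) ^ γ) ≤ ENNReal.ofReal (C * a) := by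
  have hi : Integrable (fun t : ℝ => (2:ℝ) ^ γ * (1 + ‖t‖) ^ (-γ)) :=
    (integrable_one_add_norm (by simpa using hγ)).const_mul _
  have hnn : ∀ t : ℝ, 0 ≤ (2:ℝ) ^ γ * (1 + ‖t‖) ^ (-γ) := fun t => by positivity
  refine ⟨(∫ t : ℝ, (2:ℝ) ^ γ * (1 + ‖t‖) ^ (-γ)) + 1,
    by have := integral_nonneg (μ := volume) (f := fun t : ℝ => (2:ℝ) ^ γ * (1 + ‖t‖) ^ (-γ)) hnn; linarith, fun a ha => ?_⟩
  rw [← AddCircle.lintegral_preimage 1 (-(1/2))]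
  have h1 : ∫⁻ t in Set.Ioc (-(1/2) : ℝ) (-(1/2) + 1),
      ENNReal.ofReal ((2 / (1 + ‖(t : AddCircle (1:ℝ))‖ / a)) ^ γ)
      ≤ ∫⁻ t : ℝ, ENNReal.ofReal ((2:ℝ) ^ γ * (1 + ‖t / a‖) ^ (-γ)) := by
    refine le_trans ?_ (setLIntegral_le_lintegral (Set.Ioc (-(1/2) : ℝ) (-(1/2) + 1)) _)
    refine setLIntegral_mono' measurableSet_Ioc fun t ht => ?_
    apply ENNReal.ofReal_le_ofReal
    have hn : ‖(t : AddCircle (1:ℝ))‖ = |t| := by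
      rw [AddCircle.norm_coe_eq_abs_iff _ one_ne_zero, abs_one, abs_le]
      constructor <;> linarith [ht.1, ht.2]
    rw [hn, Real.div_rpow (by norm_num) (by positivity), Real.rpow_neg (by positivity),
      norm_div, Real.norm_eq_abs, Real.norm_eq_abs, abs_of_pos ha, div_eq_mul_inv]
  refine h1.trans ?_
  rw [← ofReal_integral_eq_lintegral_ofReal (hi.comp_div ha.ne')
    (ae_of_all _ fun t => hnn _)]
  apply ENNReal.ofReal_le_ofReal
  rw [Measure.integral_comp_div (fun t : ℝ => (2:ℝ) ^ γ * (1 + ‖t‖) ^ (-γ)) a, abs_of_pos ha,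
    smul_eq_mul]
  nlinarith

lemma ker_le {γ μ : ℝ} (hγ : 1 < γ) (hμ : 0 < μ) {d : ℕ} (hd : 1 ≤ d) {y : ℝ} (hy : 0 < y)
    (z : Torus d) : (min (y / (μ * ‖z‖ ^ d)) 1) ^ γ
      ≤ ∏ j, (2 / (1 + ‖z j‖ / ((y / μ) ^ (1 / (d:ℝ))))) ^ γ := by
  set a := (y / μ) ^ (1 / (d:ℝ)) with ha
  have hd0 : (d:ℝ) ≠ 0 := by positivity
  have hap : 0 < a := by positivity
  have had : a ^ d = y / μ := by
    rw [ha, ← Real.rpow_natCast, ← Real.rpow_mul (by positivity), one_div_mul_cancel hd0, Real.rpow_one]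
  have e : y / (μ * ‖z‖ ^ d) = (a / ‖z‖) ^ d := by
    rw [div_pow, had, div_div]
  rw [Real.finsetProd_rpow _ _ (fun j _ => by positivity)]
  refine Real.rpow_le_rpow (le_min (by positivity) zero_le_one) ?_ (by linarith)
  have h2 : min (y / (μ * ‖z‖ ^ d)) 1 ≤ (min (a / ‖z‖) 1) ^ d := by
    rw [e]
    rcases le_total (a / ‖z‖) 1 with h | h
    · rw [min_eq_left h]; exact min_le_left _ _
    · rw [min_eq_right h]; simp
  refine h2.trans ?_
  calc (min (a / ‖z‖) 1) ^ d = ∏ j : Fin d, min (a / ‖z‖) 1 := by simp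
    _ ≤ _ := by
      refine Finset.prod_le_prod (fun j _ => le_min (by positivity) zero_le_one) fun j _ => ?_
      refine (min_le_frac hap (norm_nonneg z)).trans ?_
      have := norm_le_pi_norm z j
      gcongr

lemma prod_lint {X : Type*} [MeasurableSpace X] (ν : Measure X) [IsProbabilityMeasure ν] (m : ℕ)
    (f : Fin m → X → ENNReal) (hf : ∀ i, Measurable (f i)) :
    ∫⁻ x : Fin m → X, ∏ i : Fin m, f i (x i) ∂(Measure.pi fun _ => ν)
      = ∏ i, ∫⁻ z, f i z ∂ν := by
  induction m with
  | zero => simp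
  | succ m ih =>
    rw [← ((measurePreserving_piFinSuccAbove (fun _ : Fin (m + 1) => ν) 0).symm).lintegral_comp
      (by fun_prop)]
    rw [lintegral_prod_symm _ (by fun_prop)]
    rw [Fin.prod_univ_succ, ← ih (fun i => f i.succ) (fun i => hf _)]
    rw [← lintegral_const_mul _ (by fun_prop)]
    refine lintegral_congr fun x => ?_
    have : ∀ x0 : X, ∏ i : Fin (m + 1), f i
        ((MeasurableEquiv.piFinSuccAbove (fun _ : Fin (m + 1) => X) 0).symm (x0, x) i)
        = f 0 x0 * ∏ i : Fin m, f i.succ (x i) := by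
      intro x0
      rw [Fin.prod_univ_succ]
      rfl
    simp_rw [this]
    rw [lintegral_mul_const _ (hf 0)]

lemma ker_int {γ μ : ℝ} (hγ : 1 < γ) (hμ : 0 < μ) {d : ℕ} (hd : 1 ≤ d) :
    ∃ C : ℝ, 0 < C ∧ ∀ y : ℝ, 0 < y →
    ∫⁻ z : Torus d, ENNReal.ofReal ((min (y / (μ * ‖z‖ ^ d)) 1) ^ γ)
      ≤ ENNReal.ofReal (C * min 1 y) := by
  obtain ⟨C, hC, h⟩ := circ_int hγ
  refine ⟨max 1 (C ^ d / μ), by positivity, fun y hy => ?_⟩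
  have h1 : ∫⁻ z : Torus d, ENNReal.ofReal ((min (y / (μ * ‖z‖ ^ d)) 1) ^ γ) ≤ 1 := by
    calc _ ≤ ∫⁻ z : Torus d, 1 := by
          refine lintegral_mono fun z => ?_
          rw [← ENNReal.ofReal_one]
          apply ENNReal.ofReal_le_ofReal
          exact Real.rpow_le_one (le_min (by positivity) zero_le_one) (min_le_right _ _)
            (by linarith)
      _ = 1 := by simp
  have hd0 : (d:ℝ) ≠ 0 := by positivity
  have h2 : ∫⁻ z : Torus d, ENNReal.ofReal ((min (y / (μ * ‖z‖ ^ d)) 1) ^ γ)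
      ≤ ENNReal.ofReal (C ^ d / μ * y) := by
    set a := (y / μ) ^ (1 / (d:ℝ)) with ha
    have hap : 0 < a := by positivity
    have had : a ^ d = y / μ := by
      rw [ha, ← Real.rpow_natCast, ← Real.rpow_mul (by positivity), one_div_mul_cancel hd0, Real.rpow_one]
    calc _ ≤ ∫⁻ z : Torus d, ∏ j, ENNReal.ofReal ((2 / (1 + ‖z j‖ / a)) ^ γ) := by
          refine lintegral_mono fun z => ?_
          rw [← ENNReal.ofReal_prod_of_nonneg (fun j _ => by positivity)]
          exact ENNReal.ofReal_le_ofReal (ker_le hγ hμ hd hy z)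
      _ = ∏ j : Fin d, ∫⁻ z : AddCircle (1:ℝ), ENNReal.ofReal ((2 / (1 + ‖z‖ / a)) ^ γ) := by
          rw [volume_pi]
          exact prod_lint volume d (fun _ z => ENNReal.ofReal ((2 / (1 + ‖z‖ / a)) ^ γ))
            (fun _ => by fun_prop)
      _ ≤ ∏ j : Fin d, ENNReal.ofReal (C * a) := Finset.prod_le_prod' fun j _ => h a hap
      _ = ENNReal.ofReal (C ^ d / μ * y) := by
          rw [Finset.prod_const, Finset.card_univ, Fintype.card_fin,
            ← ENNReal.ofReal_pow (by positivity), mul_pow, had]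
          congr 1; ring
  rcases le_total 1 y with hy1 | hy1
  · rw [min_eq_left hy1]
    refine h1.trans ?_
    rw [← ENNReal.ofReal_one]
    exact ENNReal.ofReal_le_ofReal (by simp)
  · rw [min_eq_right hy1]
    refine h2.trans (ENNReal.ofReal_le_ofReal ?_)
    gcongr
    exact le_max_right _ _

lemma path_lint {X : Type*} [AddGroup X] [MeasurableSpace X] [MeasurableAdd₂ X] [MeasurableNeg X]
    [MeasurableSub₂ X] (ν : Measure X) [IsProbabilityMeasure ν] [ν.IsAddRightInvariant] (m : ℕ)
    (f : Fin m → X → ENNReal) (hf : ∀ i, Measurable (f i)) :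
    ∫⁻ x : Fin (m + 1) → X, ∏ i : Fin m, f i (x i.castSucc - x i.succ) ∂(Measure.pi fun _ => ν)
      = ∏ i, ∫⁻ z, f i z ∂ν := by
  induction m with
  | zero => simp
  | succ m ih =>
    rw [← ((measurePreserving_piFinSuccAbove (fun _ : Fin (m + 2) => ν) 0).symm).lintegral_comp
      (by fun_prop)]
    rw [lintegral_prod_symm _ (by fun_prop)]
    rw [Fin.prod_univ_succ, ← ih (fun i => f i.succ) (fun i => hf _)]
    rw [← lintegral_const_mul _ (by fun_prop)]
    refine lintegral_congr fun x => ?_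
    have : ∀ x0 : X, ∏ i : Fin (m + 1), f i
        ((MeasurableEquiv.piFinSuccAbove (fun _ : Fin (m + 2) => X) 0).symm (x0, x) i.castSucc
         - (MeasurableEquiv.piFinSuccAbove (fun _ : Fin (m + 2) => X) 0).symm (x0, x) i.succ)
        = f 0 (x0 - x 0) * ∏ i : Fin m, f i.succ (x i.castSucc - x i.succ) := by
      intro x0
      rw [Fin.prod_univ_succ]
      rfl
    simp_rw [this]
    rw [lintegral_mul_const _ (by fun_prop)]
    congr 1
    simpa [sub_eq_add_neg] using lintegral_add_right_eq_self (μ := ν) (f 0) (-(x 0))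

/-- edge factor -/
def edK {k : ℕ} (γ μ : ℝ) (d : ℕ) (y : Fin k → ℝ) (x : Fin k → Torus d) (i j : Fin k) : ℝ :=
  (min (y i * y j / (μ * dist (x i) (x j) ^ d)) 1) ^ γ

open scoped Classical in
/-- kernel -/
def KerK (b : Bool) {k : ℕ} (H : SimpleGraph (Fin k)) (γ μ : ℝ) (d : ℕ) (y : Fin k → ℝ)
    (x : Fin k → Torus d) : ℝ :=
  (∏ p ∈ Finset.univ.filter (fun p : Fin k × Fin k => p.1 < p.2 ∧ H.Adj p.1 p.2),
      edK γ μ d y x p.1 p.2) *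
   (if b then ∏ p ∈ Finset.univ.filter (fun p : Fin k × Fin k => p.1 < p.2 ∧ ¬H.Adj p.1 p.2),
      (1 - edK γ μ d y x p.1 p.2) else 1)

/-- position integral -/
def GK (b : Bool) {k : ℕ} (H : SimpleGraph (Fin k)) (γ μ : ℝ) (d : ℕ) (y : Fin k → ℝ) : ℝ :=
  ∫ x : Fin k → Torus d, KerK b H γ μ d y x ∂(Measure.pi fun _ => (volume : Measure (Torus d)))

section
variable {k : ℕ} {H : SimpleGraph (Fin k)} {γ μ : ℝ} {d : ℕ}

lemma ed_meas (i j : Fin k) : Measurable (fun z : (Fin k → ℝ) × (Fin k → Torus d) =>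
    edK γ μ d z.1 z.2 i j) := by
  unfold edK; fun_prop

lemma ker_meas (b : Bool) : Measurable (fun z : (Fin k → ℝ) × (Fin k → Torus d) =>
    KerK b H γ μ d z.1 z.2) := by
  unfold KerK
  refine Measurable.mul (Finset.measurable_prod _ fun p _ => ed_meas _ _) ?_
  split_ifs
  · exact Finset.measurable_prod _ fun p _ => (ed_meas _ _).const_sub _
  · exact measurable_const

lemma ed_nonneg (hμ : 0 < μ) {y : Fin k → ℝ} (hy : ∀ i, 0 < y i) (x : Fin k → Torus d) (i j) :
    0 ≤ edK γ μ d y x i j := by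
  have := hy i
  have := hy j
  exact Real.rpow_nonneg (le_min (by positivity) zero_le_one) _

lemma ed_le_one (hγ : 1 < γ) (hμ : 0 < μ) {y : Fin k → ℝ} (hy : ∀ i, 0 < y i)
    (x : Fin k → Torus d) (i j) : edK γ μ d y x i j ≤ 1 := by
  have := hy i
  have := hy j
  exact Real.rpow_le_one (le_min (by positivity) zero_le_one) (min_le_right _ _) (by linarith)

lemma ker_nonneg (b : Bool) (hγ : 1 < γ) (hμ : 0 < μ) {y : Fin k → ℝ} (hy : ∀ i, 0 < y i)
    (x : Fin k → Torus d) : 0 ≤ KerK b H γ μ d y x := by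
  unfold KerK
  refine mul_nonneg (Finset.prod_nonneg fun p _ => ed_nonneg hμ hy x _ _) ?_
  split_ifs
  · exact Finset.prod_nonneg fun p _ => sub_nonneg.2 (ed_le_one hγ hμ hy x _ _)
  · exact zero_le_one

lemma ker_le_sub (b : Bool) (hγ : 1 < γ) (hμ : 0 < μ) {y : Fin k → ℝ} (hy : ∀ i, 0 < y i)
    (x : Fin k → Torus d) : KerK b H γ μ d y x ≤ KerK false H γ μ d y x := by
  unfold KerK
  refine mul_le_mul_of_nonneg_left ?_ (Finset.prod_nonneg fun p _ => ed_nonneg hμ hy x _ _)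
  simp only [Bool.false_eq_true, if_false]
  split_ifs
  · refine Finset.prod_le_one (fun p _ => sub_nonneg.2 (ed_le_one hγ hμ hy x _ _)) fun p _ => ?_
    linarith [ed_nonneg (γ := γ) hμ hy x p.1 p.2]
  · exact le_rfl

lemma ker_sub_le_one (hγ : 1 < γ) (hμ : 0 < μ) {y : Fin k → ℝ} (hy : ∀ i, 0 < y i)
    (x : Fin k → Torus d) : KerK false H γ μ d y x ≤ 1 := by
  unfold KerK
  simp only [Bool.false_eq_true, if_false, mul_one]
  exact Finset.prod_le_one (fun p _ => ed_nonneg hμ hy x _ _) fun p _ => ed_le_one hγ hμ hy x _ _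

lemma ker_le_one (b : Bool) (hγ : 1 < γ) (hμ : 0 < μ) {y : Fin k → ℝ} (hy : ∀ i, 0 < y i)
    (x : Fin k → Torus d) : KerK b H γ μ d y x ≤ 1 :=
  (ker_le_sub b hγ hμ hy x).trans (ker_sub_le_one hγ hμ hy x)

lemma ker_sub_mono (hγ : 1 < γ) (hμ : 0 < μ) {y y' : Fin k → ℝ} (hy : ∀ i, 0 < y i)
    (hyy : ∀ i, y i ≤ y' i)
    (x : Fin k → Torus d) : KerK false H γ μ d y x ≤ KerK false H γ μ d y' x := by
  unfold KerK
  simp only [Bool.false_eq_true, if_false, mul_one]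
  refine Finset.prod_le_prod (fun p _ => ed_nonneg hμ hy x _ _) fun p _ => ?_
  have h1 := hy p.1
  have h2 := hy p.2
  refine Real.rpow_le_rpow (le_min (by positivity) zero_le_one) ?_ (by linarith)
  refine min_le_min_right _ ?_
  gcongr
  · exact h1.le.trans (hyy _)
  · exact hyy _
  · exact hyy _

lemma ker_integrable (b : Bool) (hγ : 1 < γ) (hμ : 0 < μ) {y : Fin k → ℝ} (hy : ∀ i, 0 < y i) :
    Integrable (fun x : Fin k → Torus d => KerK b H γ μ d y x)
      (Measure.pi fun _ => (volume : Measure (Torus d))) := by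
  refine Integrable.of_bound (C := 1) ((ker_meas b).comp measurable_prodMk_left).aestronglyMeasurable
    (ae_of_all _ fun x => ?_)
  rw [Real.norm_of_nonneg (ker_nonneg b hγ hμ hy x)]
  exact ker_le_one b hγ hμ hy x

lemma G_nonneg (b : Bool) (hγ : 1 < γ) (hμ : 0 < μ) {y : Fin k → ℝ} (hy : ∀ i, 0 < y i) :
    0 ≤ GK b H γ μ d y := integral_nonneg fun x => ker_nonneg b hγ hμ hy x

lemma G_le_sub (b : Bool) (hγ : 1 < γ) (hμ : 0 < μ) {y : Fin k → ℝ} (hy : ∀ i, 0 < y i) :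
    GK b H γ μ d y ≤ GK false H γ μ d y :=
  integral_mono (ker_integrable b hγ hμ hy) (ker_integrable false hγ hμ hy)
    fun x => ker_le_sub b hγ hμ hy x

lemma G_sub_mono (hγ : 1 < γ) (hμ : 0 < μ) {y y' : Fin k → ℝ} (hy : ∀ i, 0 < y i)
    (hyy : ∀ i, y i ≤ y' i) : GK false H γ μ d y ≤ GK false H γ μ d y' :=
  integral_mono (ker_integrable false hγ hμ hy)
    (ker_integrable false hγ hμ fun i => (hy i).trans_le (hyy i))
    fun x => ker_sub_mono hγ hμ hy hyy x

lemma G_meas (b : Bool) : Measurable (GK b H γ μ d) := by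
  unfold GK
  exact ((ker_meas b).stronglyMeasurable.integral_prod_right').measurable

lemma G_tendsto (b : Bool) (hγ : 1 < γ) (hμ : 0 < μ) {y : ℕ → Fin k → ℝ} {y0 : Fin k → ℝ}
    (hy : ∀ᶠ n in atTop, ∀ i, 0 < y n i) (ht : Tendsto y atTop (nhds y0)) :
    Tendsto (fun n => GK b H γ μ d (y n)) atTop (nhds (GK b H γ μ d y0)) := by
  unfold GK
  refine tendsto_integral_filter_of_dominated_convergence (fun _ => 1) ?_ ?_ (integrable_const _) ?_
  · exact Eventually.of_forall fun n =>
      ((ker_meas b).comp measurable_prodMk_left).aestronglyMeasurable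
  · filter_upwards [hy] with n hn
    refine ae_of_all _ fun x => ?_
    rw [Real.norm_of_nonneg (ker_nonneg b hγ hμ hn x)]
    exact ker_le_one b hγ hμ hn x
  · refine ae_of_all _ fun x => ?_
    have hed : ∀ i j, Continuous (fun y : Fin k → ℝ => edK γ μ d y x i j) := by
      intro i j
      unfold edK
      refine Continuous.rpow_const (by fun_prop) fun _ => Or.inr (by linarith)
    have hc : Continuous (fun y : Fin k → ℝ => KerK b H γ μ d y x) := by
      unfold KerK
      refine Continuous.mul (continuous_finsetProd _ fun p _ => hed _ _) ?_
      split_ifs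
      · exact continuous_finsetProd _ fun p _ => continuous_const.sub (hed _ _)
      · exact continuous_const
    exact (hc.tendsto y0).comp ht

lemma ed_comm (y : Fin k → ℝ) (x : Fin k → Torus d) (i j) :
    edK γ μ d y x i j = edK γ μ d y x j i := by
  unfold edK; rw [dist_comm, mul_comm (y i)]
end

section
variable {m : ℕ} {H : SimpleGraph (Fin (m + 1))} {γ μ : ℝ} {d : ℕ}

lemma ker_path (hγ : 1 < γ) (hμ : 0 < μ) (ρ : Equiv.Perm (Fin (m + 1)))
    (hρ : ∀ j : Fin m, H.Adj (ρ j.castSucc) (ρ j.succ)) {y : Fin (m + 1) → ℝ} (hy : ∀ i, 0 < y i)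
    (x : Fin (m + 1) → Torus d) : KerK false H γ μ d y x
      ≤ ∏ j : Fin m, edK γ μ d y x (ρ j.castSucc) (ρ j.succ) := by
  classical
  let g : Fin m → Fin (m + 1) × Fin (m + 1) := fun j =>
    (min (ρ j.castSucc) (ρ j.succ), max (ρ j.castSucc) (ρ j.succ))
  have hg : ∀ j, edK γ μ d y x (ρ j.castSucc) (ρ j.succ) = edK γ μ d y x (g j).1 (g j).2 := by
    intro j
    rcases le_total (ρ j.castSucc) (ρ j.succ) with h | h
    · simp [g, h]
    · simp only [g, h, min_eq_right, max_eq_left]; exact ed_comm _ _ _ _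
  have hinj : Function.Injective g := by
    intro a b hab
    simp only [g, Prod.mk.injEq] at hab
    have hor : (ρ a.castSucc = ρ b.castSucc ∧ ρ a.succ = ρ b.succ) ∨
        (ρ a.castSucc = ρ b.succ ∧ ρ a.succ = ρ b.castSucc) := by
      rcases le_total (ρ a.castSucc) (ρ a.succ) with h | h <;>
      rcases le_total (ρ b.castSucc) (ρ b.succ) with h' | h' <;>
      simp only [h, h', min_eq_left, min_eq_right, max_eq_left, max_eq_right] at hab <;> tauto
    rcases hor with ⟨h1, h2⟩ | ⟨h1, h2⟩
    · exact Fin.castSucc_injective _ (ρ.injective h1)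
    · have h1 := congrArg Fin.val (ρ.injective h1)
      have h2 := congrArg Fin.val (ρ.injective h2)
      simp at h1 h2; omega
  have hsub : Finset.univ.image g ⊆ Finset.univ.filter
      (fun p : Fin (m+1) × Fin (m+1) => p.1 < p.2 ∧ H.Adj p.1 p.2) := by
    intro p hp
    obtain ⟨j, -, rfl⟩ := Finset.mem_image.1 hp
    have ha := hρ j
    simp only [Finset.mem_filter, Finset.mem_univ, true_and, g]
    refine ⟨min_lt_max.2 ha.ne, ?_⟩
    rcases le_total (ρ j.castSucc) (ρ j.succ) with h | h
    · simpa [h] using ha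
    · simpa [h] using ha.symm
  calc KerK false H γ μ d y x = ∏ p ∈ Finset.univ.filter
        (fun p : Fin (m+1) × Fin (m+1) => p.1 < p.2 ∧ H.Adj p.1 p.2), edK γ μ d y x p.1 p.2 := by
        unfold KerK; simp
    _ ≤ ∏ p ∈ Finset.univ.image g, edK γ μ d y x p.1 p.2 := by
        rw [← Finset.prod_sdiff hsub]
        refine mul_le_of_le_one_left (Finset.prod_nonneg fun p _ => ed_nonneg hμ hy x _ _) ?_
        exact Finset.prod_le_one (fun p _ => ed_nonneg hμ hy x _ _)
          fun p _ => ed_le_one hγ hμ hy x _ _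
    _ = _ := by
        rw [Finset.prod_image fun a _ b _ h => hinj h]
        exact Finset.prod_congr rfl fun j _ => (hg j).symm

lemma G_path (hγ : 1 < γ) (hμ : 0 < μ) {C : ℝ} (hC : 0 < C) (hK : ∀ y : ℝ, 0 < y →
    ∫⁻ z : Torus d, ENNReal.ofReal ((min (y / (μ * ‖z‖ ^ d)) 1) ^ γ)
      ≤ ENNReal.ofReal (C * min 1 y)) (ρ : Equiv.Perm (Fin (m + 1)))
    (hρ : ∀ j : Fin m, H.Adj (ρ j.castSucc) (ρ j.succ)) {y : Fin (m + 1) → ℝ} (hy : ∀ i, 0 < y i) :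
    GK false H γ μ d y ≤ C ^ m * ∏ j : Fin m, min 1 (y (ρ j.castSucc) * y (ρ j.succ)) := by
  have hmn : ∀ j : Fin m, 0 ≤ min 1 (y (ρ j.castSucc) * y (ρ j.succ)) := fun j => by
    have := hy (ρ j.castSucc)
    have := hy (ρ j.succ)
    positivity
  have hnn : 0 ≤ C ^ m * ∏ j : Fin m, min 1 (y (ρ j.castSucc) * y (ρ j.succ)) :=
    mul_nonneg (by positivity) (Finset.prod_nonneg fun j _ => hmn j)
  unfold GK
  rw [integral_eq_lintegral_of_nonneg_ae (ae_of_all _ fun x => ker_nonneg false hγ hμ hy x)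
    (ker_integrable false hγ hμ hy).aestronglyMeasurable]
  refine ENNReal.toReal_le_of_le_ofReal hnn ?_
  let F : (Fin (m + 1) → Torus d) → ENNReal := fun x => ∏ j : Fin m,
    ENNReal.ofReal ((min (y (ρ j.castSucc) * y (ρ j.succ) / (μ * ‖x j.castSucc - x j.succ‖ ^ d)) 1) ^ γ)
  have hF : Measurable F := by
    refine Finset.measurable_prod _ fun j _ => ?_
    fun_prop
  calc _ ≤ ∫⁻ x : Fin (m + 1) → Torus d, F (fun i => x (ρ i))
        ∂(Measure.pi fun _ => (volume : Measure (Torus d))) := by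
        refine lintegral_mono fun x => ?_
        refine (ENNReal.ofReal_le_ofReal (ker_path hγ hμ ρ hρ hy x)).trans ?_
        rw [ENNReal.ofReal_prod_of_nonneg fun j _ => ed_nonneg hμ hy x _ _]
        simp only [F, edK, dist_eq_norm]
        exact le_rfl
    _ = ∫⁻ x : Fin (m + 1) → Torus d, F x
        ∂(Measure.pi fun _ => (volume : Measure (Torus d))) :=
        (mp_comp_inj (volume : Measure (Torus d)) ρ ρ.injective).lintegral_comp hF
    _ = ∏ j : Fin m, ∫⁻ z : Torus d, ENNReal.ofReal
          ((min (y (ρ j.castSucc) * y (ρ j.succ) / (μ * ‖z‖ ^ d)) 1) ^ γ) :=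
        path_lint volume m (fun j z => ENNReal.ofReal
          ((min (y (ρ j.castSucc) * y (ρ j.succ) / (μ * ‖z‖ ^ d)) 1) ^ γ)) (fun j => by fun_prop)
    _ ≤ ∏ j : Fin m, ENNReal.ofReal (C * min 1 (y (ρ j.castSucc) * y (ρ j.succ))) :=
        Finset.prod_le_prod' fun j _ => hK _ (mul_pos (hy _) (hy _))
    _ = _ := by
        rw [← ENNReal.ofReal_prod_of_nonneg fun j _ => mul_nonneg hC.le (hmn j),
          Finset.prod_mul_distrib]
        simp

lemma G_cycle (hγ : 1 < γ) (hμ : 0 < μ) {C : ℝ} (hC : 0 < C) (hK : ∀ y : ℝ, 0 < y →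
    ∫⁻ z : Torus d, ENNReal.ofReal ((min (y / (μ * ‖z‖ ^ d)) 1) ^ γ)
      ≤ ENNReal.ofReal (C * min 1 y)) (σ : Equiv.Perm (Fin (m + 1)))
    (hσ : ∀ i, H.Adj (σ i) (σ (i + 1))) {y : Fin (m + 1) → ℝ} (hy : ∀ i, 0 < y i) :
    GK false H γ μ d y ≤ C ^ m * ∏ i, (min 1 (y (σ i) * y (σ (i + 1)))) ^ ((m : ℝ) / (m + 1)) := by
  set M : Fin (m + 1) → ℝ := fun i => min 1 (y (σ i) * y (σ (i + 1))) with hM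
  have hMp : ∀ i, 0 < M i := fun i => lt_min one_pos (mul_pos (hy _) (hy _))
  set P := ∏ i, M i with hP
  have hPp : 0 < P := Finset.prod_pos fun i _ => hMp i
  have hG := G_nonneg (H := H) (d := d) false hγ hμ hy
  have h1 : ∀ a : Fin (m + 1), GK false H γ μ d y * M a ≤ C ^ m * P := by
    intro a
    have h := G_path (d := d) (H := H) hγ hμ hC hK ((Equiv.addLeft (a + 1)).trans σ) (by
      intro j
      simp only [Equiv.trans_apply, Equiv.coe_addLeft]
      have := hσ (a + 1 + j.castSucc)
      rwa [add_assoc (a + 1), Fin.coeSucc_eq_succ] at this) hy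
    simp only [Equiv.trans_apply, Equiv.coe_addLeft] at h
    have e : P = (∏ j : Fin m, min 1 (y (σ (a + 1 + j.castSucc)) * y (σ (a + 1 + j.succ)))) * M a := by
      rw [hP, ← Equiv.prod_comp (Equiv.addLeft (a + 1)), Fin.prod_univ_castSucc]
      congr 1
      · refine Finset.prod_congr rfl fun j _ => ?_
        simp only [hM, Equiv.coe_addLeft]
        rw [add_assoc (a + 1), Fin.coeSucc_eq_succ]
      · congr 1
        simp only [Equiv.coe_addLeft]
        rw [add_assoc, add_comm 1, Fin.last_add_one, add_zero]
    rw [e, ← mul_assoc]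
    exact mul_le_mul_of_nonneg_right h (hMp a).le
  have h2 : GK false H γ μ d y ^ (m + 1) * P ≤ (C ^ m) ^ (m + 1) * P ^ (m + 1) := by
    have := Finset.prod_le_prod (s := Finset.univ) (fun a _ => mul_nonneg hG (hMp a).le)
      (fun a _ => h1 a)
    rw [Finset.prod_mul_distrib] at this
    simpa [mul_pow] using this
  have h3 : GK false H γ μ d y ^ (m + 1) ≤ (C ^ m * P ^ ((m : ℝ) / (m + 1))) ^ (m + 1) := by
    have e : (P ^ ((m : ℝ) / (m + 1))) ^ (m + 1) = P ^ m := by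
      rw [← Real.rpow_natCast, ← Real.rpow_mul hPp.le, ← Real.rpow_natCast]
      congr 1; push_cast; field_simp
    rw [mul_pow, e]
    refine le_of_mul_le_mul_right ?_ hPp
    rw [mul_assoc, ← pow_succ]; exact h2
  have h4 := le_of_pow_le_pow_left₀ (by omega) (by positivity) h3
  rw [Real.finsetProd_rpow _ _ fun i _ => (hMp i).le]
  exact h4

/-- linear map -/
def LK (σ : Equiv.Perm (Fin (m + 1))) : (Fin (m + 1) → ℝ) →ₗ[ℝ] (Fin (m + 1) → ℝ)  where
  toFun u i := u (σ i) + u (σ (i + 1))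
  map_add' u v := by ext i; simp only [Pi.add_apply]; ring
  map_smul' c u := by ext i; simp only [Pi.smul_apply, smul_eq_mul, RingHom.id_apply]; ring

lemma LK_inj (σ : Equiv.Perm (Fin (m + 1))) (hodd : Odd (m + 1)) : Function.Injective (LK σ) := by
  rw [injective_iff_map_eq_zero]
  intro u hu
  have h1 : ∀ i, u (σ (i + 1)) = - u (σ i) := by
    intro i
    have := congrFun hu i
    simp [LK] at this
    linarith
  have h2 : ∀ (n : ℕ) (i : Fin (m + 1)), u (σ (i + n • (1 : Fin (m + 1)))) = (-1) ^ n * u (σ i) := by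
    intro n
    induction n with
    | zero => intro i; simp
    | succ n ih =>
      intro i
      rw [succ_nsmul, ← add_assoc, h1, ih, pow_succ]; ring
  have h3 : ∀ i, u (σ i) = 0 := by
    intro i
    have := h2 (m + 1) i
    have hz : (m + 1) • (1 : Fin (m + 1)) = 0 := by
      have := card_nsmul_eq_zero (x := (1 : Fin (m + 1)))
      simpa using this
    rw [hodd.neg_one_pow, hz, add_zero] at this
    linarith
  ext i
  simpa using h3 (σ.symm i)

lemma prod_exp_integrable {δ : ℝ} (hδ : 0 < δ) (σ : Equiv.Perm (Fin (m + 1)))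
    (hodd : Odd (m + 1)) :
    Integrable (fun u : Fin (m + 1) → ℝ => ∏ i, Real.exp (-(δ * |u (σ i) + u (σ (i + 1))|))) := by
  have h1 : Integrable (fun t : ℝ => Real.exp (-(δ * |t|))) := by
    rw [← integrableOn_univ, ← Set.Iic_union_Ioi (a := (0:ℝ))]
    refine IntegrableOn.union ?_ ?_
    · refine (integrableOn_exp_mul_Iic hδ 0).congr_fun (fun t ht => ?_) measurableSet_Iic
      simp only [abs_of_nonpos (Set.mem_Iic.1 ht)]; congr 1; ring
    · refine (integrableOn_exp_mul_Ioi (neg_lt_zero.2 hδ) 0).congr_fun (fun t ht => ?_)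
        measurableSet_Ioi
      simp only [abs_of_pos (Set.mem_Ioi.1 ht)]; congr 1; ring
  have h2 : Integrable (fun z : Fin (m + 1) → ℝ => ∏ i, Real.exp (-(δ * |z i|))) :=
    Integrable.fintype_prod fun _ => h1
  have hdet : LinearMap.det (LK σ) ≠ 0 := by
    intro h
    have := LinearMap.bot_lt_ker_of_det_eq_zero h
    rw [LinearMap.ker_eq_bot.2 (LK_inj σ hodd)] at this
    exact lt_irrefl _ this
  have hmap := Measure.map_linearMap_addHaar_eq_smul_addHaar
    (volume : Measure (Fin (m + 1) → ℝ)) hdet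
  have h3 : Integrable (fun z : Fin (m + 1) → ℝ => ∏ i, Real.exp (-(δ * |z i|)))
      (Measure.map (LK σ) volume) := by
    rw [hmap]
    exact h2.smul_measure ENNReal.ofReal_ne_top
  have hm : Measurable (LK σ) := (LinearMap.continuous_of_finiteDimensional (LK σ)).measurable
  exact h3.comp_measurable hm
end

section
variable {k : ℕ} {s : Set ℝ} {φ φ' : ℝ → ℝ}

lemma cov_image : (fun t : Fin k → ℝ => fun i => φ (t i)) '' (Set.univ.pi fun _ => s)
    = Set.univ.pi fun _ => φ '' s := by
  ext y
  simp only [Set.mem_image, Set.mem_univ_pi]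
  constructor
  · rintro ⟨t, ht, rfl⟩ i; exact ⟨t i, ht i, rfl⟩
  · intro h
    choose t ht he using h
    exact ⟨t, ht, funext he⟩

/-- diagonal derivative -/
def diagK (φ' : ℝ → ℝ) (t : Fin k → ℝ) : (Fin k → ℝ) →L[ℝ] (Fin k → ℝ) :=
  ContinuousLinearMap.pi fun i =>
    (φ' (t i) • ContinuousLinearMap.id ℝ ℝ).comp (ContinuousLinearMap.proj (R := ℝ) (φ := fun _ : Fin k => ℝ) i)

lemma diag_det (t : Fin k → ℝ) : (diagK φ' t).det = ∏ i, φ' (t i) := by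
  unfold diagK
  rw [ContinuousLinearMap.det_pi]
  simp [ContinuousLinearMap.det]

lemma cov_deriv (h : ∀ t ∈ s, HasDerivAt φ (φ' t) t) :
    ∀ t ∈ (Set.univ.pi fun _ : Fin k => s), HasFDerivWithinAt
      (fun t : Fin k → ℝ => fun i => φ (t i)) (diagK φ' t) (Set.univ.pi fun _ : Fin k => s) t := by
  intro t ht
  apply HasFDerivAt.hasFDerivWithinAt
  rw [hasFDerivAt_pi']
  intro i
  have h1 := (h (t i) (ht i trivial)).hasFDerivAt.comp t
    (ContinuousLinearMap.proj (R := ℝ) (φ := fun _ : Fin k => ℝ) i).hasFDerivAt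
  have e : (ContinuousLinearMap.proj (R := ℝ) (φ := fun _ : Fin k => ℝ) i).comp (diagK φ' t)
      = (ContinuousLinearMap.toSpanSingleton ℝ (φ' (t i))).comp
        (ContinuousLinearMap.proj (R := ℝ) (φ := fun _ : Fin k => ℝ) i) :=
    ContinuousLinearMap.ext fun u => by simp [diagK, mul_comm]
  rw [e]
  exact h1

lemma cov_inj (h : Set.InjOn φ s) : Set.InjOn (fun t : Fin k → ℝ => fun i => φ (t i))
    (Set.univ.pi fun _ : Fin k => s) := by
  intro a ha b hb hab
  ext i
  exact h (ha i trivial) (hb i trivial) (congrFun hab i)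

lemma cov_integrable (hs : MeasurableSet s) (h : ∀ t ∈ s, HasDerivAt φ (φ' t) t)
    (hi : Set.InjOn φ s) (f : (Fin k → ℝ) → ℝ) :
    IntegrableOn f (Set.univ.pi fun _ => φ '' s) ↔
      IntegrableOn (fun t : Fin k → ℝ => (∏ i, |φ' (t i)|) * f (fun i => φ (t i)))
        (Set.univ.pi fun _ => s) := by
  rw [← cov_image, integrableOn_image_iff_integrableOn_abs_det_fderiv_smul volume
    (MeasurableSet.univ_pi fun _ => hs) (cov_deriv h) (cov_inj hi)]
  simp only [diag_det, Finset.abs_prod, smul_eq_mul]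

lemma cov_integral (hs : MeasurableSet s) (h : ∀ t ∈ s, HasDerivAt φ (φ' t) t)
    (hi : Set.InjOn φ s) (f : (Fin k → ℝ) → ℝ) :
    ∫ y in (Set.univ.pi fun _ => φ '' s), f y =
      ∫ t in (Set.univ.pi fun _ => s), (∏ i, |φ' (t i)|) * f (fun i => φ (t i)) := by
  rw [← cov_image, integral_image_eq_integral_abs_det_fderiv_smul volume
    (MeasurableSet.univ_pi fun _ => hs) (cov_deriv h) (cov_inj hi)]
  simp only [diag_det, Finset.abs_prod, smul_eq_mul]
end

section
variable {τ : ℝ}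

lemma phi_image (hτ : τ ∈ Set.Ioo (2:ℝ) 3) {C : ℝ} (hC : 0 < C) :
    (fun y : ℝ => C * y ^ (1 - τ)) '' Set.Ioi 0 = Set.Ioi 0 := by
  ext t
  simp only [Set.mem_image, Set.mem_Ioi]
  constructor
  · rintro ⟨y, hy, rfl⟩; positivity
  · intro ht; exact ⟨_, phi_pos (τ := τ) hC ht, phi_pow hτ hC ht⟩

lemma psi_inj (hτ : τ ∈ Set.Ioo (2:ℝ) 3) {C : ℝ} (hC : 0 < C) :
    Set.InjOn (fun y : ℝ => C * y ^ (1 - τ)) (Set.Ioi 0) := by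
  intro a ha b hb hab
  have h := mul_left_cancel₀ hC.ne' hab
  exact (Real.rpow_left_inj (le_of_lt ha) (le_of_lt hb) (by linarith [hτ.1])).1 h

lemma phi_psi (hτ : τ ∈ Set.Ioo (2:ℝ) 3) {C : ℝ} (hC : 0 < C) {y : ℝ} (hy : 0 < y) :
    phiK τ C (C * y ^ (1 - τ)) = y := by
  have ht : 0 < C * y ^ (1 - τ) := by positivity
  exact psi_inj hτ hC (phi_pos hC ht) hy (phi_pow hτ hC ht)

lemma psi_deriv {C : ℝ} : ∀ y ∈ Set.Ioi (0:ℝ),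
    HasDerivAt (fun y : ℝ => C * y ^ (1 - τ)) (C * (1 - τ) * y ^ (-τ)) y := by
  intro y hy
  have := (Real.hasDerivAt_rpow_const (p := 1 - τ) (Or.inl (ne_of_gt hy))).const_mul C
  have e : C * (1 - τ) * y ^ (-τ) = C * ((1 - τ) * y ^ (1 - τ - 1)) := by
    rw [show 1 - τ - 1 = -τ by ring]; ring
  rw [e]; exact this

variable {k : ℕ}

lemma psi_integrand (hτ : τ ∈ Set.Ioo (2:ℝ) 3) {C : ℝ} (hC : 0 < C) (f : (Fin k → ℝ) → ℝ)
    {y : Fin k → ℝ} (hy : y ∈ Set.univ.pi fun _ : Fin k => Set.Ioi (0:ℝ)) :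
    (∏ i, |C * (1 - τ) * y i ^ (-τ)|) * f (fun i => phiK τ C (C * y i ^ (1 - τ)))
      = (C * (τ - 1)) ^ k * ((∏ i, y i ^ (-τ)) * f y) := by
  have hy' : ∀ i, 0 < y i := fun i => hy i trivial
  have e : (fun i => phiK τ C (C * y i ^ (1 - τ))) = y := funext fun i => phi_psi hτ hC (hy' i)
  have e2 : ∀ i, |C * (1 - τ) * y i ^ (-τ)| = C * (τ - 1) * y i ^ (-τ) := by
    intro i
    have := Real.rpow_pos_of_pos (hy' i) (-τ)
    have h2 : 0 < C * (τ - 1) := mul_pos hC (by linarith [hτ.1])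
    rw [show C * (1 - τ) * y i ^ (-τ) = -(C * (τ - 1) * y i ^ (-τ)) by ring, abs_neg,
      abs_of_pos (by positivity)]
  rw [e]
  simp_rw [e2]
  rw [Finset.prod_mul_distrib]
  simp only [Finset.prod_const, Finset.card_univ, Fintype.card_fin]
  ring

lemma phi_cov_integral (hτ : τ ∈ Set.Ioo (2:ℝ) 3) {C : ℝ} (hC : 0 < C) (f : (Fin k → ℝ) → ℝ) :
    ∫ t in (Set.univ.pi fun _ : Fin k => Set.Ioi (0:ℝ)), f (fun i => phiK τ C (t i))
      = (C * (τ - 1)) ^ k *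
        ∫ y in (Set.univ.pi fun _ : Fin k => Set.Ioi (0:ℝ)), (∏ i, y i ^ (-τ)) * f y := by
  have := cov_integral (k := k) measurableSet_Ioi (psi_deriv (τ := τ) (C := C)) (psi_inj hτ hC)
    (fun t => f (fun i => phiK τ C (t i)))
  rw [phi_image hτ hC] at this
  rw [this, ← integral_const_mul]
  exact setIntegral_congr_fun (MeasurableSet.univ_pi fun _ => measurableSet_Ioi)
    fun y hy => psi_integrand hτ hC f hy

lemma phi_cov_integrable (hτ : τ ∈ Set.Ioo (2:ℝ) 3) {C : ℝ} (hC : 0 < C) (f : (Fin k → ℝ) → ℝ)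
    (hf : IntegrableOn (fun y : Fin k → ℝ => (∏ i, y i ^ (-τ)) * f y)
      (Set.univ.pi fun _ : Fin k => Set.Ioi (0:ℝ))) :
    IntegrableOn (fun t : Fin k → ℝ => f (fun i => phiK τ C (t i)))
      (Set.univ.pi fun _ : Fin k => Set.Ioi (0:ℝ)) := by
  have := cov_integrable (k := k) measurableSet_Ioi (psi_deriv (τ := τ) (C := C)) (psi_inj hτ hC)
    (fun t => f (fun i => phiK τ C (t i)))
  rw [phi_image hτ hC] at this
  rw [this]
  have h2 : IntegrableOn (fun y : Fin k → ℝ => (C * (τ - 1)) ^ k * ((∏ i, y i ^ (-τ)) * f y))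
      (Set.univ.pi fun _ : Fin k => Set.Ioi (0:ℝ)) := Integrable.const_mul hf _
  exact h2.congr_fun (fun y hy => (psi_integrand hτ hC f hy).symm)
    (MeasurableSet.univ_pi fun _ => measurableSet_Ioi)
end

section
variable {γ μ τ : ℝ} {d : ℕ}

lemma I_integrable_aux {m : ℕ} {H : SimpleGraph (Fin (m + 1))} (hd : 1 ≤ d)
    (hτ : τ ∈ Set.Ioo (2:ℝ) 3) (hγ : 1 < γ) (hμ : 0 < μ)
    (σ : Equiv.Perm (Fin (m + 1))) (hσ : ∀ i, H.Adj (σ i) (σ (i + 1)))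
    (hk : 2 / (3 - τ) < ((m + 1 : ℕ) : ℝ)) (hodd : Odd (m + 1)) :
    IntegrableOn (fun y : Fin (m + 1) → ℝ => (∏ i, y i ^ (-τ)) * GK false H γ μ d y)
      (Set.univ.pi fun _ => Set.Ioi (0:ℝ)) := by
  obtain ⟨C, hC, hK⟩ := ker_int (d := d) hγ hμ hd
  have himg : Real.exp '' Set.univ = Set.Ioi 0 := by rw [Set.image_univ, Real.range_exp]
  rw [← himg, cov_integrable MeasurableSet.univ (fun t _ => Real.hasDerivAt_exp t)
    Real.exp_injective.injOn, Set.pi_univ, integrableOn_univ]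
  have h1 := hτ.1
  have h2 := hτ.2
  set θ : ℝ := (m : ℝ) / (m + 1) with hθ
  set δ : ℝ := min ((τ - 1) / 2) (θ - (τ - 1) / 2) with hδ
  have hθs : (τ - 1) / 2 < θ := by
    rw [div_lt_iff₀ (by linarith)] at hk
    push_cast at hk
    rw [hθ, lt_div_iff₀ (by positivity)]
    nlinarith
  have hδp : 0 < δ := lt_min (by linarith) (by linarith)
  refine Integrable.mono' ((prod_exp_integrable hδp σ hodd).const_mul (C ^ m)) ?_ ?_
  · refine Measurable.aestronglyMeasurable ?_
    have := G_meas (H := H) (γ := γ) (μ := μ) (d := d) false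
    have h3 : Measurable (fun t : Fin (m + 1) → ℝ => GK false H γ μ d (fun i => Real.exp (t i))) :=
      this.comp (by fun_prop)
    fun_prop
  · refine ae_of_all _ fun u => ?_
    have hy : ∀ i, 0 < (fun i => Real.exp (u i)) i := fun i => Real.exp_pos _
    have hG0 := G_nonneg (H := H) (d := d) false hγ hμ hy
    have hG := G_cycle (H := H) (d := d) hγ hμ hC hK σ hσ hy
    rw [Real.norm_of_nonneg (by positivity)]
    -- rewrite the weight
    have hw : (∏ i, |Real.exp (u i)|) * ∏ i, Real.exp (u i) ^ (-τ)
        = ∏ i, Real.exp (-((τ - 1) / 2) * (u (σ i) + u (σ (i + 1)))) := by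
      rw [← Finset.prod_mul_distrib, ← Real.exp_sum, ← Finset.mul_sum, Finset.sum_add_distrib]
      have e1 : ∑ i, u (σ i) = ∑ i, u i := Equiv.sum_comp σ u
      have e2 : ∑ i, u (σ (i + 1)) = ∑ i, u i := by
        rw [← e1]; exact Equiv.sum_comp (Equiv.addRight 1) (fun i => u (σ i))
      have e3 : ∀ i, |Real.exp (u i)| * Real.exp (u i) ^ (-τ) = Real.exp ((1 - τ) * u i) := by
        intro i
        rw [Real.abs_exp, ← Real.exp_mul, ← Real.exp_add]; congr 1; ring
      simp_rw [e3]
      rw [e1, e2, ← Real.exp_sum, ← Finset.mul_sum]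
      congr 1; ring
    have hnn : 0 ≤ ∏ i, Real.exp (-((τ - 1) / 2) * (u (σ i) + u (σ (i + 1)))) :=
      Finset.prod_nonneg fun i _ => (Real.exp_pos _).le
    rw [← mul_assoc, hw]
    refine (mul_le_mul_of_nonneg_left hG hnn).trans ?_
    rw [mul_left_comm, ← Finset.prod_mul_distrib]
    refine mul_le_mul_of_nonneg_left ?_ (by positivity)
    refine Finset.prod_le_prod (fun i _ => by positivity) fun i _ => ?_
    rw [← Real.exp_add]
    set z := u (σ i) + u (σ (i + 1))
    have hθ0 : 0 < θ := by linarith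
    rcases le_total 0 z with hz | hz
    · rw [min_eq_left (Real.one_le_exp hz), Real.one_rpow, mul_one, abs_of_nonneg hz]
      apply Real.exp_le_exp.2
      have : δ ≤ (τ - 1) / 2 := min_le_left _ _
      nlinarith
    · rw [min_eq_right (Real.exp_le_one_iff.2 hz), abs_of_nonpos hz, ← Real.exp_mul, ← Real.exp_add]
      apply Real.exp_le_exp.2
      have : δ ≤ θ - (τ - 1) / 2 := min_le_right _ _
      nlinarith

lemma I_integrable {k : ℕ} [NeZero k] {H : SimpleGraph (Fin k)} (hd : 1 ≤ d)
    (hτ : τ ∈ Set.Ioo (2:ℝ) 3) (hγ : 1 < γ) (hμ : 0 < μ) (hH : IsHamiltonianPattern H)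
    (hk : 2 / (3 - τ) < (k : ℝ)) (hodd : Odd k) :
    IntegrableOn (fun y : Fin k → ℝ => (∏ i, y i ^ (-τ)) * GK false H γ μ d y)
      (Set.univ.pi fun _ => Set.Ioi (0:ℝ)) := by
  obtain ⟨m, rfl⟩ := Nat.exists_eq_succ_of_ne_zero (NeZero.ne k)
  obtain ⟨σ, hσ⟩ := hH
  exact I_integrable_aux hd hτ hγ hμ σ hσ hk hodd
end

section
variable {k : ℕ} {H : SimpleGraph (Fin k)} {γ μ : ℝ} {d : ℕ}

lemma cp_eq_ed (hγ : 1 < γ) (hμ : 0 < μ) {n : ℕ} {w : Fin k → ℝ} (hw : ∀ i, 0 < w i)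
    (x : Fin k → Torus d) (i j : Fin k) :
    cpK γ μ d n w x i j = edK γ μ d (fun i => w i / √(n:ℝ)) x i j := by
  unfold cpK edK
  have e : w i / √(n:ℝ) * (w j / √(n:ℝ)) / (μ * dist (x i) (x j) ^ d)
      = w i * w j / ((n : ℝ) * μ * dist (x i) (x j) ^ d) := by
    rw [div_mul_div_comm, Real.mul_self_sqrt (Nat.cast_nonneg n), div_div, mul_assoc]
  simp only [e]
  have h1 := hw i
  have h2 := hw j
  set q := w i * w j / ((n : ℝ) * μ * dist (x i) (x j) ^ d) with hq
  have hq0 : 0 ≤ q := by positivity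
  rcases le_total q 1 with h | h
  · rw [min_eq_left h, min_eq_right (Real.rpow_le_one hq0 h (by linarith))]
  · rw [min_eq_right h, Real.one_rpow, min_eq_left (Real.one_le_rpow h (by linarith))]

lemma prod_fac_eq (b : Bool) (hγ : 1 < γ) (hμ : 0 < μ) {n : ℕ} {w : Fin k → ℝ}
    (hw : ∀ i, 0 < w i) (x : Fin k → Torus d) :
    ∏ p : PairsK k, facK b H p (cpK γ μ d n w x p.1.1 p.1.2)
      = KerK b H γ μ d (fun i => w i / √(n:ℝ)) x := by
  classical
  simp_rw [cp_eq_ed hγ hμ hw]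
  set e := edK γ μ d (fun i => w i / √(n:ℝ)) x
  have h1 : ∏ p : PairsK k, facK b H p (e p.1.1 p.1.2)
      = ∏ p ∈ Finset.univ.filter (fun p : Fin k × Fin k => p.1 < p.2),
        (if H.Adj p.1 p.2 then e p.1 p.2 else if b then 1 - e p.1 p.2 else 1) := by
    rw [Finset.prod_subtype (p := fun p : Fin k × Fin k => p.1 < p.2) _ (by simp)]
    rfl
  rw [h1]
  unfold KerK
  rw [← Finset.filter_filter, ← Finset.filter_filter, Finset.prod_filter (fun p : Fin k × Fin k => H.Adj p.1 p.2)]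
  have h2 : (if b then ∏ p ∈ {p ∈ Finset.univ.filter (fun p : Fin k × Fin k => p.1 < p.2) | ¬ H.Adj p.1 p.2},
      (1 - e p.1 p.2) else 1) = ∏ p ∈ Finset.univ.filter (fun p : Fin k × Fin k => p.1 < p.2),
        (if H.Adj p.1 p.2 then 1 else if b then 1 - e p.1 p.2 else 1) := by
    rw [Finset.prod_filter]
    cases b
    · simp
    · simp only [if_true]
      refine Finset.prod_congr rfl fun p _ => ?_
      by_cases h : H.Adj p.1 p.2 <;> simp [h]
  refine Eq.trans ?_ (congrArg _ h2.symm)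
  rw [← Finset.prod_mul_distrib]
  refine Finset.prod_congr rfl fun p _ => ?_
  by_cases h : H.Adj p.1 p.2 <;> simp [h, e]

lemma expect_G (b : Bool) (hγ : 1 < γ) (hμ : 0 < μ) (n : ℕ) (μW : Measure ℝ)
    [IsProbabilityMeasure μW] (hW : ∀ᵐ x ∂μW, (0:ℝ) < x) :
    ∫ ω, (cntK b H γ μ d n ω : ℝ) ∂(girgMeasure μW d n)
      = (n.descFactorial k : ℝ) * ∫ w : Fin k → ℝ, GK b H γ μ d (fun i => w i / √(n:ℝ))
        ∂(Measure.pi fun _ => μW) := by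
  rw [cnt_expect, small_real b H γ μ hμ d n μW hW]
  congr 1
  have h : ∀ᵐ w ∂(Measure.pi fun _ : Fin k => μW), ∀ i, 0 < w i := by
    rw [ae_all_iff]
    intro i
    exact (Measure.quasiMeasurePreserving_eval (fun _ : Fin k => μW) i).ae hW
  refine integral_congr_ae ?_
  filter_upwards [h] with w hw
  unfold GK
  refine integral_congr_ae (ae_of_all _ fun x => ?_)
  exact prod_fac_eq b hγ hμ hw x

/-- rescaled integrand on the unit cube -/
def gK (b : Bool) (H : SimpleGraph (Fin k)) (γ μ : ℝ) (d : ℕ) (μW : Measure ℝ) (n : ℕ) :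
    (Fin k → ℝ) → ℝ :=
  (Set.univ.pi fun _ : Fin k => Set.Ioo (0:ℝ) 1).indicator
    (fun u => GK b H γ μ d (fun i => quC μW (u i) / √(n:ℝ)))

lemma g_meas (b : Bool) (μW : Measure ℝ) [IsProbabilityMeasure μW] (h1 : μW (Set.Iio 1) = 0)
    (n : ℕ) : Measurable (gK b H γ μ d μW n) := by
  unfold gK
  refine Measurable.indicator ?_ (MeasurableSet.univ_pi fun _ => measurableSet_Ioo)
  refine (G_meas b).comp ?_
  have := quC_meas μW h1
  fun_prop

lemma int_cube (b : Bool) (μW : Measure ℝ) [IsProbabilityMeasure μW] (h1 : μW (Set.Iio 1) = 0)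
    (n : ℕ) :
    ∫ w : Fin k → ℝ, GK b H γ μ d (fun i => w i / √(n:ℝ)) ∂(Measure.pi fun _ => μW)
      = ∫ u : Fin k → ℝ, gK b H γ μ d μW n u := by
  have hq := quC_meas μW h1
  have hm : (Measure.pi fun _ : Fin k => μW)
      = (volume.restrict (Set.univ.pi fun _ : Fin k => Set.Ioo (0:ℝ) 1)).map
        (fun u i => quC μW (u i)) := by
    rw [volume_pi, Measure.restrict_pi_pi]
    have : ∀ i : Fin k, SigmaFinite (Measure.map (quC μW) (volume.restrict (Set.Ioo (0:ℝ) 1))) := by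
      intro i; rw [map_qu μW h1]; infer_instance
    rw [Measure.pi_map_pi (f := fun _ : Fin k => quC μW) fun _ => hq.aemeasurable]
    simp_rw [map_qu μW h1]
  rw [hm, integral_map]
  · unfold gK
    rw [integral_indicator (MeasurableSet.univ_pi fun _ => measurableSet_Ioo)]
  · exact Measurable.aemeasurable (by fun_prop)
  · exact ((G_meas b).comp (by fun_prop)).aestronglyMeasurable

lemma int_scale (b : Bool) (μW : Measure ℝ) (n : ℕ) {R : ℝ} (hR : 0 < R) :
    ∫ u : Fin k → ℝ, gK b H γ μ d μW n u
      = R ^ k * ∫ t in (Set.univ.pi fun _ : Fin k => Set.Ioi (0:ℝ)), gK b H γ μ d μW n (R • t) := by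
  rw [setIntegral_eq_integral_of_forall_compl_eq_zero]
  · rw [Measure.integral_comp_smul, Module.finrank_fin_fun, abs_of_pos (by positivity), smul_eq_mul,
      mul_inv_cancel_left₀ (by positivity)]
  · intro t ht
    unfold gK
    refine Set.indicator_of_notMem (fun h => ht fun i _ => ?_) _
    have := (h i trivial).1
    simp only [Pi.smul_apply, smul_eq_mul] at this
    exact pos_of_mul_pos_right this hR.le

variable {τ c : ℝ}

lemma phi_scale (hτ : τ ∈ Set.Ioo (2:ℝ) 3) {C t : ℝ} (hC : 0 < C) (ht : 0 < t) {n : ℕ} (hn : 0 < n) :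
    phiK τ C ((n:ℝ) ^ (-((τ - 1) / 2)) * t) / √(n:ℝ) = phiK τ C t := by
  have hn' : (0:ℝ) < n := by exact_mod_cast hn
  have h2 : 0 < τ - 1 := by linarith [hτ.1]
  unfold phiK
  rw [mul_comm, ← div_div, Real.div_rpow (by positivity) (by positivity), ← Real.rpow_mul hn'.le,
    show -((τ - 1) / 2) * (1 / (τ - 1)) = -(1/2) by field_simp, Real.rpow_neg hn'.le,
    ← Real.sqrt_eq_rpow]
  have : 0 < √(n:ℝ) := Real.sqrt_pos.2 hn'
  field_simp

lemma main_limit [NeZero k] (b : Bool) (hd : 1 ≤ d) (hτ : τ ∈ Set.Ioo (2:ℝ) 3) (hγ : 1 < γ)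
    (hμ : 0 < μ)
    (μW : Measure ℝ) [IsProbabilityMeasure μW] (hW : WeightTail τ c μW)
    (hH : IsHamiltonianPattern H) (hk : 2 / (3 - τ) < (k : ℝ)) (hodd : Odd k) :
    Tendsto (fun n : ℕ => ∫ t in (Set.univ.pi fun _ : Fin k => Set.Ioi (0:ℝ)),
        gK b H γ μ d μW n (((n:ℝ) ^ (-((τ - 1) / 2))) • t)) atTop
      (nhds ((c * (τ - 1)) ^ k * ∫ y in (Set.univ.pi fun _ : Fin k => Set.Ioi (0:ℝ)),
        (∏ i, y i ^ (-τ)) * GK b H γ μ d y)) := by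
  rw [← phi_cov_integral hτ hW.1]
  have h1 := hW.2.1
  have hτ1 : 0 < τ - 1 := by linarith [hτ.1]
  have hms : MeasurableSet (Set.univ.pi fun _ : Fin k => Set.Ioi (0:ℝ)) :=
    MeasurableSet.univ_pi fun _ => measurableSet_Ioi
  obtain ⟨C, hC, hb⟩ := surv_bound hτ hW
  have hR : Tendsto (fun n : ℕ => (n:ℝ) ^ (-((τ - 1) / 2))) atTop (nhds 0) :=
    (tendsto_rpow_neg_atTop (by linarith)).comp tendsto_natCast_atTop_atTop
  refine tendsto_integral_filter_of_dominated_convergence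
    (fun t => GK false H γ μ d (fun i => phiK τ C (t i))) ?_ ?_ ?_ ?_
  · exact Eventually.of_forall fun n =>
      ((g_meas b μW h1 n).comp (measurable_const_smul _)).aestronglyMeasurable
  · filter_upwards [eventually_gt_atTop 0] with n hn
    have hn' : (0:ℝ) < n := by exact_mod_cast hn
    have hsq : 0 < √(n:ℝ) := Real.sqrt_pos.2 hn'
    filter_upwards [ae_restrict_mem hms] with t ht
    have ht' : ∀ i, 0 < t i := fun i => ht i trivial
    unfold gK
    by_cases hm : ((n:ℝ) ^ (-((τ - 1) / 2))) • t ∈ (Set.univ.pi fun _ : Fin k => Set.Ioo (0:ℝ) 1)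
    · rw [Set.indicator_of_mem hm]
      have hq : ∀ i, quC μW ((((n:ℝ) ^ (-((τ - 1) / 2))) • t) i)
          = quK μW ((n:ℝ) ^ (-((τ - 1) / 2)) * t i) := fun i => by
        unfold quC; rw [Set.indicator_of_mem (hm i trivial)]; rfl
      simp_rw [hq]
      have hpos : ∀ i, 0 < quK μW ((n:ℝ) ^ (-((τ - 1) / 2)) * t i) / √(n:ℝ) := fun i =>
        div_pos (lt_of_lt_of_le one_pos (qu_ge_one μW h1 (hm i trivial))) hsq
      rw [Real.norm_of_nonneg (G_nonneg b hγ hμ hpos)]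
      refine (G_le_sub b hγ hμ hpos).trans (G_sub_mono hγ hμ hpos fun i => ?_)
      rw [← phi_scale hτ hC (ht' i) hn]
      exact div_le_div_of_nonneg_right (qu_bound hτ h1 hC hb (hm i trivial)) hsq.le
    · rw [Set.indicator_of_notMem hm, norm_zero]
      exact G_nonneg false hγ hμ fun i => phi_pos hC (ht' i)
  · exact phi_cov_integrable hτ hC _ (I_integrable hd hτ hγ hμ hH hk hodd)
  · filter_upwards [ae_restrict_mem hms] with t ht
    have ht' : ∀ i, 0 < t i := fun i => ht i trivial
    have hev : ∀ᶠ n : ℕ in atTop, ∀ i, (n:ℝ) ^ (-((τ - 1) / 2)) * t i ∈ Set.Ioo (0:ℝ) 1 := by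
      rw [eventually_all]
      intro i
      have h0 : Tendsto (fun n : ℕ => (n:ℝ) ^ (-((τ - 1) / 2)) * t i) atTop (nhds 0) := by
        simpa using hR.mul_const (t i)
      filter_upwards [h0.eventually_lt_const one_pos, eventually_gt_atTop 0] with n h2 hn
      have hn' : (0:ℝ) < n := by exact_mod_cast hn
      exact ⟨mul_pos (Real.rpow_pos_of_pos hn' _) (ht' i), h2⟩
    have hT := G_tendsto (H := H) (d := d) b hγ hμ
      (y := fun (n : ℕ) i => quK μW ((n:ℝ) ^ (-((τ - 1) / 2)) * t i) / √(n:ℝ))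
      (y0 := fun i => phiK τ c (t i)) ?_ ?_
    · refine hT.congr' ?_
      filter_upwards [hev] with n hn
      unfold gK
      have hm : ((n:ℝ) ^ (-((τ - 1) / 2))) • t ∈
          (Set.univ.pi fun _ : Fin k => Set.Ioo (0:ℝ) 1) := fun i _ => hn i
      rw [Set.indicator_of_mem hm]
      congr 1
      funext i
      unfold quC; rw [Set.indicator_of_mem (hm i trivial)]; rfl
    · filter_upwards [hev, eventually_gt_atTop 0] with n hn hn0 i
      have hn' : (0:ℝ) < n := by exact_mod_cast hn0
      exact div_pos (lt_of_lt_of_le one_pos (qu_ge_one μW h1 (hn i))) (Real.sqrt_pos.2 hn')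
    · rw [tendsto_pi_nhds]
      exact fun i => qu_tendsto hτ hW (ht' i)

lemma expect_limit [NeZero k] (b : Bool) (hd : 1 ≤ d) (hτ : τ ∈ Set.Ioo (2:ℝ) 3) (hγ : 1 < γ)
    (hμ : 0 < μ)
    (μW : Measure ℝ) [IsProbabilityMeasure μW] (hW : WeightTail τ c μW)
    (hH : IsHamiltonianPattern H) (hk : 2 / (3 - τ) < (k : ℝ)) (hodd : Odd k) :
    Tendsto (fun n : ℕ => (∫ ω, (cntK b H γ μ d n ω : ℝ) ∂(girgMeasure μW d n)) /
        (n : ℝ) ^ ((k : ℝ) * (3 - τ) / 2)) atTop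
      (nhds ((c * (τ - 1)) ^ k * ∫ y in (Set.univ.pi fun _ : Fin k => Set.Ioi (0:ℝ)),
        (∏ i, y i ^ (-τ)) * GK b H γ μ d y)) := by
  have hpos : ∀ᵐ x ∂μW, (0:ℝ) < x := by
    filter_upwards [W_pos hW] with x hx; linarith
  have hdf : Tendsto (fun n : ℕ => (n.descFactorial k : ℝ) / (n:ℝ) ^ k) atTop (nhds 1) := by
    refine (Asymptotics.isEquivalent_iff_tendsto_one ?_).1 (isEquivalent_descFactorial k)
    filter_upwards [eventually_gt_atTop 0] with n hn
    positivity
  have := hdf.mul (main_limit b hd hτ hγ hμ μW hW hH hk hodd)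
  rw [one_mul] at this
  refine this.congr' ?_
  filter_upwards [eventually_gt_atTop 0] with n hn
  have hn' : (0:ℝ) < n := by exact_mod_cast hn
  rw [expect_G b hγ hμ n μW hpos, int_cube b μW hW.2.1,
    int_scale b μW n (R := (n:ℝ) ^ (-((τ - 1) / 2))) (Real.rpow_pos_of_pos hn' _)]
  have e : (n:ℝ) ^ ((k : ℝ) * (3 - τ) / 2) = (n:ℝ) ^ k * ((n:ℝ) ^ (-((τ - 1) / 2))) ^ k := by
    rw [← Real.rpow_natCast, ← Real.rpow_natCast, ← Real.rpow_mul hn'.le, ← Real.rpow_add hn']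
    congr 1; ring
  rw [e]
  have h3 : (0:ℝ) < (n:ℝ) ^ (-((τ - 1) / 2)) := Real.rpow_pos_of_pos hn' _
  field_simp

/-! positivity -/

lemma exists_pts (hd : 1 ≤ d) : ∃ x : Fin k → Torus d, Function.Injective x := by
  refine ⟨fun i _ => (((i:ℝ) / k : ℝ) : AddCircle (1:ℝ)), fun i j hij => ?_⟩
  have h := congrFun hij ⟨0, hd⟩
  have hmem : ∀ i : Fin k, ((i:ℝ) / k : ℝ) ∈ Set.Ico (0:ℝ) (0 + 1) := by
    intro i
    have hk : (0:ℝ) < k := by exact_mod_cast (Nat.zero_le _).trans_lt i.2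
    refine ⟨by positivity, ?_⟩
    rw [zero_add, div_lt_one hk]; exact_mod_cast i.2
  have h2 := (AddCircle.coe_eq_coe_iff_of_mem_Ico (hmem i) (hmem j)).1 h
  have hk : (0:ℝ) < k := by exact_mod_cast (Nat.zero_le _).trans_lt i.2
  rw [div_left_inj' hk.ne'] at h2
  exact Fin.ext (by exact_mod_cast h2)

lemma G_pos_exists (b : Bool) (hd : 1 ≤ d) (hγ : 1 < γ) (hμ : 0 < μ) :
    ∃ s : ℝ, 0 < s ∧ ∀ y : Fin k → ℝ, (∀ i, 0 < y i ∧ y i < s) → 0 < GK b H γ μ d y := by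
  obtain ⟨x0, hx0⟩ := exists_pts (k := k) hd
  obtain ⟨r, hr, hrd⟩ : ∃ r : ℝ, 0 < r ∧ ∀ p : Fin k × Fin k, p.1 ≠ p.2 → r < dist (x0 p.1) (x0 p.2) := by
    have : ∀ᶠ r in nhdsWithin (0:ℝ) (Set.Ioi 0), ∀ p : Fin k × Fin k, p.1 ≠ p.2 → r < dist (x0 p.1) (x0 p.2) := by
      rw [eventually_all]
      intro p
      by_cases h : p.1 = p.2
      · simp [h]
      · have : 0 < dist (x0 p.1) (x0 p.2) := dist_pos.2 (hx0.ne h)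
        filter_upwards [nhdsWithin_le_nhds (Iio_mem_nhds this)] with r hr _ using hr
    obtain ⟨r, h1, h2⟩ := (this.and self_mem_nhdsWithin).exists
    exact ⟨r, h2, h1⟩
  have hV : IsOpen {x : Fin k → Torus d | ∀ p : Fin k × Fin k, p.1 ≠ p.2 → r < dist (x p.1) (x p.2)} := by
    simp only [Set.ofPred_forall]
    refine isOpen_iInter_of_finite fun p => isOpen_iInter_of_finite fun _ => ?_
    exact isOpen_lt (by fun_prop) (by fun_prop)
  have hVp := hV.measure_pos (Measure.pi fun _ : Fin k => (volume : Measure (Torus d))) ⟨x0, hrd⟩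
  refine ⟨√(μ * r ^ d), Real.sqrt_pos.2 (by positivity), fun y hy => ?_⟩
  have hy0 : ∀ i, 0 < y i := fun i => (hy i).1
  unfold GK
  rw [integral_pos_iff_support_of_nonneg (fun x => ker_nonneg b hγ hμ hy0 x) (ker_integrable b hγ hμ hy0)]
  refine hVp.trans_le (measure_mono fun x hx => ?_)
  refine ne_of_gt ?_
  have hed : ∀ p : Fin k × Fin k, p.1 < p.2 → 0 < edK γ μ d y x p.1 p.2 ∧ edK γ μ d y x p.1 p.2 < 1 := by
    intro p hp
    have hdist : r < dist (x p.1) (x p.2) := hx p hp.ne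
    have hdp : 0 < dist (x p.1) (x p.2) := hr.trans hdist
    have h1 := hy0 p.1
    have h2 := hy0 p.2
    have hq : 0 < y p.1 * y p.2 / (μ * dist (x p.1) (x p.2) ^ d) := by positivity
    have hq1 : y p.1 * y p.2 / (μ * dist (x p.1) (x p.2) ^ d) < 1 := by
      rw [div_lt_one (by positivity)]
      calc y p.1 * y p.2 < √(μ * r ^ d) * √(μ * r ^ d) :=
            mul_lt_mul'' (hy p.1).2 (hy p.2).2 h1.le h2.le
        _ = μ * r ^ d := Real.mul_self_sqrt (by positivity)
        _ ≤ _ := by gcongr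
    unfold edK
    rw [min_eq_left hq1.le]
    exact ⟨Real.rpow_pos_of_pos hq _, Real.rpow_lt_one hq.le hq1 (by linarith)⟩
  unfold KerK
  refine mul_pos (Finset.prod_pos fun p hp => (hed p (by simp at hp; exact hp.1)).1) ?_
  split_ifs
  · exact Finset.prod_pos fun p hp => sub_pos.2 (hed p (by simp at hp; exact hp.1)).2
  · exact one_pos

lemma I_pos [NeZero k] (b : Bool) (hd : 1 ≤ d) (hτ : τ ∈ Set.Ioo (2:ℝ) 3) (hγ : 1 < γ)
    (hμ : 0 < μ)
    (hH : IsHamiltonianPattern H) (hk : 2 / (3 - τ) < (k : ℝ)) (hodd : Odd k) :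
    0 < ∫ y in (Set.univ.pi fun _ : Fin k => Set.Ioi (0:ℝ)),
        (∏ i, y i ^ (-τ)) * GK b H γ μ d y := by
  have hms : MeasurableSet (Set.univ.pi fun _ : Fin k => Set.Ioi (0:ℝ)) :=
    MeasurableSet.univ_pi fun _ => measurableSet_Ioi
  have hw : ∀ y ∈ (Set.univ.pi fun _ : Fin k => Set.Ioi (0:ℝ)), 0 < ∏ i, y i ^ (-τ) := fun y hy =>
    Finset.prod_pos fun i _ => Real.rpow_pos_of_pos (hy i trivial) _
  have hnn : ∀ y ∈ (Set.univ.pi fun _ : Fin k => Set.Ioi (0:ℝ)),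
      0 ≤ (∏ i, y i ^ (-τ)) * GK b H γ μ d y := fun y hy =>
    mul_nonneg (hw y hy).le (G_nonneg b hγ hμ fun i => hy i trivial)
  have hint : IntegrableOn (fun y : Fin k → ℝ => (∏ i, y i ^ (-τ)) * GK b H γ μ d y)
      (Set.univ.pi fun _ : Fin k => Set.Ioi (0:ℝ)) := by
    refine Integrable.mono' (I_integrable hd hτ hγ hμ hH hk hodd) ?_ ?_
    · have := G_meas (H := H) (γ := γ) (μ := μ) (d := d) b
      exact Measurable.aestronglyMeasurable (by fun_prop)
    · filter_upwards [ae_restrict_mem hms] with y hy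
      rw [Real.norm_of_nonneg (hnn y hy)]
      exact mul_le_mul_of_nonneg_left (G_le_sub b hγ hμ fun i => hy i trivial) (hw y hy).le
  rw [setIntegral_pos_iff_support_of_nonneg_ae ?_ hint]
  · obtain ⟨s, hs, hG⟩ := G_pos_exists (H := H) b hd hγ hμ
    have hU : IsOpen (Set.univ.pi fun _ : Fin k => Set.Ioo (0:ℝ) s) :=
      isOpen_set_pi Set.finite_univ fun _ _ => isOpen_Ioo
    refine (hU.measure_pos volume ⟨fun _ => s / 2, fun i _ => ⟨by positivity, by simp only []; linarith⟩⟩).trans_le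
      (measure_mono fun y hy => ?_)
    have hy' : y ∈ (Set.univ.pi fun _ : Fin k => Set.Ioi (0:ℝ)) := fun i _ => (hy i trivial).1
    exact ⟨(mul_pos (hw y hy') (hG y fun i => hy i trivial)).ne', hy'⟩
  · filter_upwards [ae_restrict_mem hms] with y hy using hnn y hy

lemma pos_set_eq : {y : Fin k → ℝ | ∀ i, 0 < y i} = Set.univ.pi fun _ : Fin k => Set.Ioi (0:ℝ) := by
  ext y; simp

lemma Isub_eq : IsubInt τ γ μ d H = ∫ y in (Set.univ.pi fun _ : Fin k => Set.Ioi (0:ℝ)),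
        (∏ i, y i ^ (-τ)) * GK false H γ μ d y := by
  unfold IsubInt GK KerK edK
  rw [pos_set_eq]
  simp only [Bool.false_eq_true, if_false, mul_one]
  rfl

lemma Iind_eq : IindInt τ γ μ d H = ∫ y in (Set.univ.pi fun _ : Fin k => Set.Ioi (0:ℝ)),
        (∏ i, y i ^ (-τ)) * GK true H γ μ d y := by
  unfold IindInt GK KerK edK
  rw [pos_set_eq]
  simp only [if_true]
  rfl
end

/-- Proposition `ConvergenceMeanNongeo`: for a Hamiltonian pattern
of odd size `k > 2/(3-τ)`, `E[N^{sub}(H)]/n^{k(3-τ)/2}` and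
`E[N^{ind}(H)]/n^{k(3-τ)/2}` converge to finite positive constants proportional to
the corresponding limiting integrals. -/
theorem girg_hamiltonian_nongeometric_expectation
    {k d : ℕ} [NeZero k] (hd : 1 ≤ d) (τ γ c : ℝ) (hτ : τ ∈ Set.Ioo (2:ℝ) 3) (hγ : 1 < γ)
    (μW : Measure ℝ) [IsProbabilityMeasure μW] (hW : WeightTail τ c μW)
    (H : SimpleGraph (Fin k)) (hH : IsHamiltonianPattern H)
    (hk : 2 / (3 - τ) < (k : ℝ)) (hodd : Odd k) :
    (0 < IsubInt τ γ (wMean μW) d H ∧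
      ∃ C : ℝ, 0 < C ∧
        Tendsto (fun n : ℕ =>
            (∫ ω, (nSubTotal H γ (wMean μW) d n ω : ℝ) ∂(girgMeasure μW d n)) /
              (n : ℝ) ^ ((k : ℝ) * (3 - τ) / 2))
          atTop (nhds (C * IsubInt τ γ (wMean μW) d H))) ∧
    (0 < IindInt τ γ (wMean μW) d H ∧
      ∃ C : ℝ, 0 < C ∧
        Tendsto (fun n : ℕ =>
            (∫ ω, (nIndTotal H γ (wMean μW) d n ω : ℝ) ∂(girgMeasure μW d n)) /
              (n : ℝ) ^ ((k : ℝ) * (3 - τ) / 2))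
          atTop (nhds (C * IindInt τ γ (wMean μW) d H))) := by
  have hμ : 0 < wMean μW := wMean_pos hτ hW
  have hc : 0 < (c * (τ - 1)) ^ k := pow_pos (mul_pos hW.1 (by linarith [hτ.1])) k
  refine ⟨⟨?_, (c * (τ - 1)) ^ k, hc, ?_⟩, ⟨?_, (c * (τ - 1)) ^ k, hc, ?_⟩⟩
  · rw [Isub_eq]; exact I_pos false hd hτ hγ hμ hH hk hodd
  · simp only [nSub_eq]
    rw [Isub_eq]; exact expect_limit false hd hτ hγ hμ μW hW hH hk hodd
  · rw [Iind_eq]; exact I_pos true hd hτ hγ hμ hH hk hodd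
  · simp only [nInd_eq]
    rw [Iind_eq]; exact expect_limit true hd hτ hγ hμ μW hW hH hk hodd

end
end

section
/- Fix τ ∈ (2,3), γ > 1, an integer d ≥ 1, a constant μ > 0, and an odd integer k with k > 2/(3−τ). Then the integral ∫_{(0,∞)^k} ∏_{i=1}^k y_i^{−τ} ∫_{(T^d)^k} ∏_{i=1}^{k} min( y_i y_{i+1} / (μ ‖x_i − x_{i+1}‖^d), 1 )^γ dx_1 ⋯ dx_k dy_1 ⋯ dy_k is finite, where indices are taken modulo k (so y_{k+1} = y_1, x_{k+1} = x_1), the inner integral is with respect to the uniform (Haar) probability measure on the torus T^d = ℝ^d/ℤ^d, and ‖x−y‖ denotes the torus distance max_{j≤d} min(|x^(j)−y^(j)|, 1−|x^(j)−y^(j)|). -/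
open MeasureTheory Filter Finset

noncomputable section

instance aux_prob (d : ℕ) : IsProbabilityMeasure (volume : Measure (Torus d)) := by
  constructor
  rw [← Set.pi_univ Set.univ, volume_pi_pi]
  simp [AddCircle.measure_univ]

lemma aux_path (d n : ℕ) (g : Fin n → Torus d → ENNReal) (hg : ∀ i, Measurable (g i)) :
    ∫⁻ x : Fin (n+1) → Torus d, ∏ i : Fin n, g i (x i.castSucc - x i.succ)
      ∂(Measure.pi fun _ => (volume : Measure (Torus d))) = ∏ i, ∫⁻ u, g i u := by
  induction n with
  | zero => simp
  | succ n ih =>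
    have hmp := measurePreserving_piFinSuccAbove
      (fun _ : Fin (n+2) => (volume : Measure (Torus d))) 0
    rw [← hmp.symm.lintegral_comp_emb (MeasurableEquiv.measurableEmbedding _)]
    rw [lintegral_prod_symm']
    · have key : ∀ (a : Torus d) (b : Fin (n+1) → Torus d),
          ∏ i : Fin (n+1), g i
            ((MeasurableEquiv.piFinSuccAbove (fun _ => Torus d) 0).symm (a, b) i.castSucc -
             (MeasurableEquiv.piFinSuccAbove (fun _ => Torus d) 0).symm (a, b) i.succ) =
          g 0 (a - b 0) * ∏ i : Fin n, g i.succ (b i.castSucc - b i.succ) := by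
        intro a b
        rw [Fin.prod_univ_succ]
        rfl
      simp_rw [key]
      have h2 : ∀ b : Fin (n+1) → Torus d, ∫⁻ a : Torus d,
          g 0 (a - b 0) * ∏ i : Fin n, g i.succ (b i.castSucc - b i.succ) =
          (∫⁻ u, g 0 u) * ∏ i : Fin n, g i.succ (b i.castSucc - b i.succ) := by
        intro b
        rw [lintegral_mul_const _ (by have := hg 0; fun_prop),
          lintegral_sub_right_eq_self (fun u => g 0 u)]
      simp_rw [h2]
      rw [lintegral_const_mul, ih (fun i => g i.succ) (fun i => hg _), Fin.prod_univ_succ]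
      refine Finset.measurable_prod _ fun i _ => (hg _).comp (by fun_prop)
    · refine Measurable.comp (g := fun x : Fin (n+2) → Torus d =>
        ∏ i : Fin (n+1), g i (x i.castSucc - x i.succ)) ?_ (MeasurableEquiv.measurable _)
      refine Finset.measurable_prod _ fun i _ => (hg _).comp (by fun_prop)

lemma aux_cycle_last (d n : ℕ) (g : Fin (n+1) → Torus d → ENNReal) (hg : ∀ i, Measurable (g i))
    (h1 : ∀ i u, g i u ≤ 1) :
    ∫⁻ x : Fin (n+1) → Torus d, ∏ i : Fin (n+1), g i (x i - x (i+1))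
      ∂(Measure.pi fun _ => (volume : Measure (Torus d)))
      ≤ ∏ i : Fin n, ∫⁻ u, g i.castSucc u := by
  rw [← aux_path d n (fun i => g i.castSucc) (fun i => hg _)]
  refine lintegral_mono fun x => ?_
  dsimp only
  rw [Fin.prod_univ_castSucc]
  refine (mul_le_of_le_one_right' (h1 _ _)).trans (le_of_eq ?_)
  refine Finset.prod_congr rfl fun i _ => ?_
  rw [Fin.coeSucc_eq_succ]

lemma aux_cycle (d k : ℕ) [NeZero k] (g : Fin k → Torus d → ENNReal) (hg : ∀ i, Measurable (g i))
    (h1 : ∀ i u, g i u ≤ 1) (e : Fin k) :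
    ∫⁻ x : Fin k → Torus d, ∏ i : Fin k, g i (x i - x (i+1))
      ∂(Measure.pi fun _ => (volume : Measure (Torus d)))
      ≤ ∏ i ∈ univ.erase e, ∫⁻ u, g i u := by
  obtain ⟨n, rfl⟩ : ∃ n, k = n + 1 := ⟨k - 1, by have := NeZero.pos k; omega⟩
  set c : Fin (n+1) ≃ Fin (n+1) := Equiv.addRight (e + 1) with hc
  have hmp := measurePreserving_piCongrLeft (fun _ : Fin (n+1) => (volume : Measure (Torus d))) c
  rw [← hmp.lintegral_comp_emb (MeasurableEquiv.measurableEmbedding _)]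
  have key : ∀ x : Fin (n+1) → Torus d, ∏ i, g i
      (MeasurableEquiv.piCongrLeft (fun _ => Torus d) c x i -
        MeasurableEquiv.piCongrLeft (fun _ => Torus d) c x (i+1)) =
      ∏ i, g (c i) (x i - x (i + 1)) := by
    intro x
    rw [← c.prod_comp]
    refine Finset.prod_congr rfl fun i _ => ?_
    have : c i + 1 = c (i + 1) := by simp [hc]; abel
    rw [this, MeasurableEquiv.coe_piCongrLeft, Equiv.piCongrLeft_apply_apply,
      Equiv.piCongrLeft_apply_apply]
  simp_rw [key]
  refine (aux_cycle_last d n (fun i => g (c i)) (fun i => hg _) (fun i => h1 _)).trans (le_of_eq ?_)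
  have hce : c (Fin.last n) = e := by
    simp [hc, add_comm e 1]
  have himg : (univ : Finset (Fin n)).map (Fin.castSuccEmb.trans c.toEmbedding) = univ.erase e := by
    ext j
    simp only [Finset.mem_map, Finset.mem_univ, true_and, Finset.mem_erase, and_true]
    constructor
    · rintro ⟨i, rfl⟩ h
      have : c i.castSucc = c (Fin.last n) := h.trans hce.symm
      exact (Fin.castSucc_lt_last i).ne (c.injective this)
    · intro h
      have h' : c.symm j ≠ Fin.last n := by
        intro h2; apply h; rw [← hce, ← h2]; simp
      refine ⟨(c.symm j).castPred h', ?_⟩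
      simp
  rw [← himg, Finset.prod_map]
  rfl

lemma aux_geom {k : ℕ} [NeZero k] (I : ENNReal) (m : Fin k → ENNReal)
    (h : ∀ e, I ≤ ∏ i ∈ univ.erase e, m i) :
    I ≤ ∏ i, m i ^ (1 - 1 / (k : ℝ)) := by
  have hk : (k : ℝ) ≠ 0 := NeZero.ne _
  have hk1 : 1 ≤ k := NeZero.pos k
  have h1 : I ^ k ≤ ∏ i, m i ^ (k - 1) := by
    calc I ^ k = ∏ _e : Fin k, I := by simp
      _ ≤ ∏ e : Fin k, ∏ i ∈ univ.erase e, m i := Finset.prod_le_prod' fun e _ => h e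
      _ = ∏ i, ∏ _e ∈ univ.erase i, m i := by
        refine Finset.prod_comm' ?_
        intro x y; simp [eq_comm]
      _ = _ := by simp
  calc I = (I ^ k) ^ (1 / (k:ℝ)) := by
        rw [← ENNReal.rpow_natCast, ← ENNReal.rpow_mul, mul_one_div_cancel hk, ENNReal.rpow_one]
    _ ≤ (∏ i, m i ^ (k - 1)) ^ (1 / (k:ℝ)) := ENNReal.rpow_le_rpow h1 (by positivity)
    _ = _ := by
        rw [← ENNReal.prod_rpow_of_nonneg (by positivity)]
        refine Finset.prod_congr rfl fun i _ => ?_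
        rw [← ENNReal.rpow_natCast, ← ENNReal.rpow_mul]
        congr 1
        rw [Nat.cast_sub hk1]
        field_simp
        simp

lemma aux_ball (d : ℕ) (r : ℝ) (hr : 0 ≤ r) :
    (volume : Measure (Torus d)) (Metric.closedBall 0 r) ≤ ENNReal.ofReal (2 ^ d * r ^ d) := by
  rw [closedBall_pi _ hr, volume_pi_pi]
  calc _ ≤ ∏ _i : Fin d, ENNReal.ofReal (2 * r) := by
        refine Finset.prod_le_prod' fun i _ => ?_
        rw [AddCircle.volume_closedBall]
        exact ENNReal.ofReal_le_ofReal (min_le_right _ _)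
    _ = _ := by
        rw [Finset.prod_const, ← ENNReal.ofReal_pow (by positivity), mul_pow]; simp

def auxP (γ μbar : ℝ) (d : ℕ) (s : ℝ) (u : Torus d) : ℝ :=
  (min (s / (μbar * ‖u‖ ^ d)) 1) ^ γ

lemma auxP_nonneg (γ μbar : ℝ) (hμ : 0 < μbar) (d : ℕ) (s : ℝ) (hs : 0 < s) (u : Torus d) :
    0 ≤ auxP γ μbar d s u := by
  unfold auxP; positivity

lemma auxP_le_one (γ μbar : ℝ) (hγ : 1 < γ) (hμ : 0 < μbar) (d : ℕ) (s : ℝ) (hs : 0 < s)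
    (u : Torus d) : auxP γ μbar d s u ≤ 1 :=
  Real.rpow_le_one (by positivity) (min_le_right _ _) (by linarith)

lemma auxP_meas (γ μbar : ℝ) (d : ℕ) (s : ℝ) : Measurable (auxP γ μbar d s) := by
  unfold auxP
  fun_prop

lemma aux_edge (γ μbar : ℝ) (hγ : 1 < γ) (hμ : 0 < μbar) (d : ℕ) (hd : 1 ≤ d) :
    ∃ C : ℝ, 0 < C ∧ ∀ s : ℝ, 0 < s →
      ∫⁻ u : Torus d, ENNReal.ofReal (auxP γ μbar d s u) ≤ ENNReal.ofReal (C * min s 1) := by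
  set J : ENNReal := ∫⁻ t in Set.Ioc (0:ℝ) 1, ENNReal.ofReal (t ^ (-(1/γ))) with hJ
  have hJfin : J < ⊤ := by
    have : IntervalIntegrable (fun t : ℝ => t ^ (-(1/γ))) volume 0 1 := by
      refine intervalIntegral.intervalIntegrable_rpow' ?_
      rw [neg_lt_neg_iff, div_lt_one (by linarith)]; exact hγ
    rw [intervalIntegrable_iff_integrableOn_Ioc_of_le zero_le_one] at this
    exact this.lintegral_lt_top
  refine ⟨max 1 (2 ^ d / μbar * J.toReal), by positivity, fun s hs => ?_⟩
  rw [mul_min_of_nonneg _ _ (by positivity), mul_one]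
  rw [ENNReal.ofReal_min, le_min_iff]
  constructor
  · rw [lintegral_eq_lintegral_meas_le _ (Eventually.of_forall (auxP_nonneg γ μbar hμ d s hs))
      (auxP_meas γ μbar d s).aemeasurable]
    have hb : ∀ t ∈ Set.Ioi (0:ℝ), volume {u : Torus d | t ≤ auxP γ μbar d s u} ≤
        (Set.Ioc (0:ℝ) 1).indicator (fun t => ENNReal.ofReal (2 ^ d / μbar * s) *
          ENNReal.ofReal (t ^ (-(1/γ)))) t := by
      intro t ht
      have ht0 : 0 < t := ht
      by_cases h1 : t ≤ 1
      · rw [Set.indicator_of_mem (show t ∈ Set.Ioc (0:ℝ) 1 from ⟨ht, h1⟩)]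
        set R : ℝ := s / μbar * t ^ (-(1/γ)) with hR
        have hR0 : 0 < R := by positivity
        have hd0 : (d : ℝ) ≠ 0 := by positivity
        have hsub : {u : Torus d | t ≤ auxP γ μbar d s u} ⊆
            Metric.closedBall 0 (R ^ (1 / (d:ℝ))) := by
          intro u hu
          rw [mem_closedBall_zero_iff]
          have hu' : t ≤ (min (s / (μbar * ‖u‖ ^ d)) 1) ^ γ := hu
          have h2 : t ^ (1/γ) ≤ s / (μbar * ‖u‖ ^ d) := by
            have := Real.rpow_le_rpow ht0.le hu' (show 0 ≤ 1/γ by positivity)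
            rw [← Real.rpow_mul (by positivity), mul_one_div_cancel (by linarith), Real.rpow_one] at this
            exact this.trans (min_le_left _ _)
          have h3 : 0 < ‖u‖ ^ d := by
            by_contra hn
            have : ‖u‖ ^ d = 0 := le_antisymm (not_lt.mp hn) (by positivity)
            rw [this] at h2
            simp at h2
            have : 0 < t ^ γ⁻¹ := by positivity
            linarith
          have h4 : ‖u‖ ^ d ≤ R := by
            rw [le_div_iff₀ (by positivity)] at h2
            rw [hR, Real.rpow_neg ht0.le, ← div_eq_mul_inv, div_div, le_div_iff₀ (by positivity)]
            linarith
          have := Real.rpow_le_rpow h3.le h4 (show 0 ≤ 1/(d:ℝ) by positivity)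
          rwa [← Real.rpow_natCast, ← Real.rpow_mul (norm_nonneg _), mul_one_div_cancel hd0,
            Real.rpow_one] at this
        refine (measure_mono hsub).trans ((aux_ball d _ (by positivity)).trans (le_of_eq ?_))
        rw [← ENNReal.ofReal_mul (by positivity), ← Real.rpow_natCast (R ^ _) d,
          ← Real.rpow_mul hR0.le, one_div_mul_cancel hd0, Real.rpow_one, hR]
        congr 1; ring
      · have : {u : Torus d | t ≤ auxP γ μbar d s u} = ∅ := by
          ext u
          simp only [Set.mem_ofPred_eq, Set.mem_empty_iff_false, iff_false, not_le]
          exact (auxP_le_one γ μbar hγ hμ d s hs u).trans_lt (not_le.mp h1)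
        rw [this]; simp
    refine (setLIntegral_mono' measurableSet_Ioi hb).trans ?_
    refine (setLIntegral_le_lintegral _ _).trans ?_
    rw [lintegral_indicator measurableSet_Ioc, lintegral_const_mul _ (by fun_prop), ← hJ,
      ← ENNReal.ofReal_toReal hJfin.ne, ← ENNReal.ofReal_mul (by positivity)]
    refine ENNReal.ofReal_le_ofReal ?_
    calc 2 ^ d / μbar * s * J.toReal = (2 ^ d / μbar * J.toReal) * s := by ring
      _ ≤ _ := by gcongr; rw [ENNReal.ofReal_toReal hJfin.ne]; exact le_max_right _ _
  · calc _ ≤ ∫⁻ u : Torus d, 1 := by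
          refine lintegral_mono fun u => ?_
          rw [← ENNReal.ofReal_one]
          exact ENNReal.ofReal_le_ofReal (auxP_le_one γ μbar hγ hμ d s hs u)
      _ = ENNReal.ofReal 1 := by simp
      _ ≤ _ := ENNReal.ofReal_le_ofReal (le_max_left _ _)

lemma aux_inj {k : ℕ} [NeZero k] (hodd : Odd k) (z : Fin k → ℝ)
    (h : ∀ i, z i + z (i + 1) = 0) : z = 0 := by
  funext i
  have h2 : ∀ n : ℕ, z (i + n • (1 : Fin k)) = (-1) ^ n * z i := by
    intro n
    induction n with
    | zero => simp
    | succ n ih =>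
      have := h (i + n • (1 : Fin k))
      rw [succ_nsmul, ← add_assoc, pow_succ]
      linarith
  have h3 := h2 k
  have h4 : k • (1 : Fin k) = 0 := by
    have := card_nsmul_eq_zero' (x := (1 : Fin k))
    simpa using this
  rw [h4, hodd.neg_one_pow] at h3
  simp at h3
  simp
  linarith

def auxA (k : ℕ) [NeZero k] : (Fin k → ℝ) →ₗ[ℝ] (Fin k → ℝ) where
  toFun z := fun i => z i + z (i + 1)
  map_add' x y := by funext i; simp; ring
  map_smul' c x := by funext i; simp; ring

def auxH (τ C θ : ℝ) (w : ℝ) : ℝ :=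
  Real.exp ((1 - τ) / 2 * w) * (C * min (Real.exp w) 1) ^ θ

lemma auxH_int (τ C θ : ℝ) (hC : 0 < C) (hτ : 1 < τ) (hθ : (τ - 1) / 2 < θ) :
    Integrable (auxH τ C θ) := by
  have hθ0 : 0 < θ := by linarith
  have hcont : Continuous (auxH τ C θ) := by
    unfold auxH
    refine Continuous.mul (by fun_prop) (Continuous.rpow_const (by fun_prop) fun x => Or.inr hθ0.le)
  rw [← integrableOn_univ, ← Set.Iic_union_Ioi (a := (0:ℝ))]
  refine IntegrableOn.union ?_ ?_
  · refine IntegrableOn.congr_fun (f := fun w => C ^ θ * Real.exp ((θ - (τ - 1)/2) * w))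
      ((integrableOn_exp_mul_Iic (by linarith) 0).const_mul (C ^ θ)) ?_ measurableSet_Iic
    intro w hw
    have hw' : w ≤ 0 := hw
    simp only [auxH]
    rw [min_eq_left (Real.exp_le_one_iff.mpr hw'), Real.mul_rpow hC.le (Real.exp_pos _).le,
      ← Real.exp_mul, mul_left_comm, ← Real.exp_add]
    congr 2; ring
  · refine IntegrableOn.congr_fun (f := fun w => C ^ θ * Real.exp ((1 - τ)/2 * w))
      ((integrableOn_exp_mul_Ioi (by linarith) 0).const_mul (C ^ θ)) ?_ measurableSet_Ioi
    intro w hw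
    have hw' : 0 < w := hw
    simp only [auxH]
    rw [min_eq_right (Real.one_le_exp hw'.le), mul_one, mul_comm]

lemma aux_outer (τ C θ : ℝ) (k : ℕ) [NeZero k] (hodd : Odd k) (hC : 0 < C) (hτ : 1 < τ)
    (hθ : (τ - 1) / 2 < θ) :
    (∫⁻ y : Fin k → ℝ in {y | ∀ i, 0 < y i},
      (∏ i, ENNReal.ofReal (y i ^ (-τ))) *
        ∏ i, ENNReal.ofReal (C * min (y i * y (i + 1)) 1) ^ θ) < ⊤ := by
  have hθ0 : 0 < θ := by linarith
  set f : (Fin k → ℝ) → (Fin k → ℝ) := fun z i => Real.exp (z i) with hf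
  set f' : (Fin k → ℝ) → (Fin k → ℝ) →L[ℝ] (Fin k → ℝ) := fun z =>
    ContinuousLinearMap.pi fun i =>
      ((Real.exp (z i) • ContinuousLinearMap.id ℝ ℝ).comp (ContinuousLinearMap.proj i)) with hf'
  have himg : {y : Fin k → ℝ | ∀ i, 0 < y i} = f '' Set.univ := by
    ext y
    simp only [Set.mem_ofPred_eq, Set.image_univ, Set.mem_range]
    constructor
    · intro h
      exact ⟨fun i => Real.log (y i), funext fun i => Real.exp_log (h i)⟩
    · rintro ⟨z, rfl⟩ i
      exact Real.exp_pos _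
  have hder : ∀ z ∈ Set.univ, HasFDerivWithinAt f (f' z) Set.univ z := by
    intro z _
    rw [hasFDerivWithinAt_univ, hasFDerivAt_pi]
    intro i
    have h1 : HasFDerivAt (fun z : Fin k → ℝ => z i)
      (ContinuousLinearMap.proj (R := ℝ) (φ := fun _ : Fin k => ℝ) i) z := hasFDerivAt_apply i z
    have h2 := h1.exp
    have h3 : (Real.exp (z i) • ContinuousLinearMap.id ℝ ℝ).comp
        (ContinuousLinearMap.proj (R := ℝ) (φ := fun _ : Fin k => ℝ) i) =
        Real.exp (z i) • ContinuousLinearMap.proj (R := ℝ) (φ := fun _ : Fin k => ℝ) i := by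
      ext; simp
    rw [← h3] at h2
    exact h2
  have hinj : Set.InjOn f Set.univ := by
    intro a _ b _ hab
    funext i
    exact Real.exp_injective (congrFun hab i)
  have hdet : ∀ z, (f' z).det = ∏ i, Real.exp (z i) := by
    intro z
    simp only [hf']
    rw [ContinuousLinearMap.det_pi]
    simp [ContinuousLinearMap.det]
  rw [himg, lintegral_image_eq_lintegral_abs_det_fderiv_mul _ MeasurableSet.univ hder hinj,
    Measure.restrict_univ]
  have hkey : ∀ z : Fin k → ℝ, ENNReal.ofReal |(f' z).det| *
      ((∏ i, ENNReal.ofReal (f z i ^ (-τ))) *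
        ∏ i, ENNReal.ofReal (C * min (f z i * f z (i + 1)) 1) ^ θ) =
      ENNReal.ofReal (∏ i, auxH τ C θ (auxA k z i)) := by
    intro z
    have e1 : ∀ i, ENNReal.ofReal (C * min (f z i * f z (i + 1)) 1) ^ θ =
        ENNReal.ofReal ((C * min (f z i * f z (i + 1)) 1) ^ θ) := by
      intro i
      refine ENNReal.ofReal_rpow_of_nonneg ?_ hθ0.le
      simp only [hf]; positivity
    simp_rw [e1]
    have e2 : 0 ≤ ∏ i, Real.exp (z i) := by positivity
    have e3 : 0 ≤ ∏ i, f z i ^ (-τ) := by simp only [hf]; positivity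
    rw [hdet, abs_of_nonneg e2, ← ENNReal.ofReal_prod_of_nonneg (fun i _ => by simp only [hf]; positivity),
      ← ENNReal.ofReal_prod_of_nonneg (fun i _ => by simp only [hf]; positivity),
      ← ENNReal.ofReal_mul e3, ← ENNReal.ofReal_mul e2]
    congr 1
    simp only [auxH]
    rw [Finset.prod_mul_distrib, ← mul_assoc]
    congr 1
    · simp only [hf, ← Real.exp_mul, ← Real.exp_sum, ← Real.exp_add]
      congr 1
      rw [← Finset.mul_sum, ← Finset.sum_mul]
      have : ∑ i, auxA k z i = 2 * ∑ i, z i := by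
        simp only [auxA, LinearMap.coe_mk, AddHom.coe_mk]
        have hs : ∑ i, z (i + 1) = ∑ i, z i :=
          Equiv.sum_comp (Equiv.addRight (1 : Fin k)) z
        rw [Finset.sum_add_distrib, hs]
        ring
      rw [this]; ring
    · refine Finset.prod_congr rfl fun i _ => ?_
      simp [hf, auxA, Real.exp_add]
  simp_rw [hkey]
  have hAdet : LinearMap.det (auxA k) ≠ 0 := by
    have : Function.Injective (auxA k) := by
      rw [injective_iff_map_eq_zero]
      intro z hz
      exact aux_inj hodd z fun i => congrFun hz i
    have hb := LinearEquiv.ofInjectiveEndo (auxA k) this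
    have := LinearEquiv.isUnit_det' (LinearEquiv.ofInjectiveEndo (auxA k) this)
    exact this.ne_zero
  have hmeas : Measurable fun w : Fin k → ℝ => ENNReal.ofReal (∏ i, auxH τ C θ (w i)) := by
    unfold auxH; fun_prop
  have hAm : Measurable (auxA k) := (LinearMap.continuous_of_finiteDimensional _).measurable
  have := lintegral_map (μ := volume) hmeas hAm
  rw [← this, Real.map_linearMap_volume_pi_eq_smul_volume_pi hAdet, lintegral_smul_measure]
  refine ENNReal.mul_lt_top ENNReal.ofReal_lt_top ?_
  exact (Integrable.fintype_prod (f := fun _ => auxH τ C θ)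
    (fun _ => auxH_int τ C θ hC hτ hθ)).lintegral_lt_top

/-- finiteness of the limiting integral `I^{sub}(H_k)` for the
Hamiltonian cycle of odd length `k > 2/(3-τ)`. -/
theorem hamiltonian_cycle_integral_finite
    (τ γ μbar : ℝ) (d k : ℕ) [NeZero k] (hd : 1 ≤ d)
    (hτ : τ ∈ Set.Ioo (2:ℝ) 3) (hγ : 1 < γ) (hμ : 0 < μbar)
    (hodd : Odd k) (hk : 2 / (3 - τ) < (k : ℝ)) :
    (∫⁻ y : Fin k → ℝ in {y | ∀ i, 0 < y i},
        (∏ i, ENNReal.ofReal (y i ^ (-τ))) *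
          ∫⁻ x : Fin k → Torus d,
            ∏ i : Fin k,
              ENNReal.ofReal
                ((min (y i * y (i + 1) / (μbar * dist (x i) (x (i + 1)) ^ d)) 1) ^ γ)
            ∂(Measure.pi fun _ => (volume : Measure (Torus d)))
        ∂(Measure.pi fun _ => (volume : Measure ℝ))) < ⊤ := by
  have hk0 : (0:ℝ) < k := by have := NeZero.pos k; exact_mod_cast this
  obtain ⟨hτ2, hτ3⟩ := hτ
  have hθ : (τ - 1) / 2 < 1 - 1 / (k:ℝ) := by
    rw [div_lt_iff₀ (by linarith)] at hk
    have : 1 / (k:ℝ) < (3 - τ) / 2 := by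
      rw [div_lt_div_iff₀ hk0 (by norm_num)]; linarith
    linarith
  obtain ⟨C, hC, hE⟩ := aux_edge γ μbar hγ hμ d hd
  refine lt_of_le_of_lt ?_ (aux_outer τ C (1 - 1 / (k:ℝ)) k hodd hC (by linarith) hθ)
  refine setLIntegral_mono' ?_ ?_
  · have : {y : Fin k → ℝ | ∀ i, 0 < y i} = Set.univ.pi fun _ => Set.Ioi 0 := by
      ext y; simp
    rw [this]
    exact MeasurableSet.univ_pi fun _ => measurableSet_Ioi
  · intro y hy
    have hy' : ∀ i, 0 < y i := hy
    gcongr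
    refine aux_geom _ _ fun e => ?_
    have h1 := aux_cycle d k
      (fun i u => ENNReal.ofReal (auxP γ μbar d (y i * y (i + 1)) u))
      (fun i => (auxP_meas γ μbar d _).ennreal_ofReal)
      (fun i u => by
        rw [← ENNReal.ofReal_one]
        exact ENNReal.ofReal_le_ofReal
          (auxP_le_one γ μbar hγ hμ d _ (mul_pos (hy' i) (hy' (i + 1))) u)) e
    simp only [auxP, ← dist_eq_norm] at h1
    refine h1.trans (Finset.prod_le_prod' fun i _ => ?_)
    exact hE _ (mul_pos (hy' i) (hy' (i + 1)))

end
end
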